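/- arXiv:1501.01489 — 3 statements merged into one kernel-verified Lean document; each statement's English description precedes it below -/
import Mathlib

section
/- Let k = k(n) be a function of n with k(n) → ∞ and k(n)²/n → 0 as n→∞, and let R_k denote the number of chords in the k-core of the uniformly random chord diagram C_n of size n. Then (n − R_{k(n)})/k(n) → 1 in probability as n→∞. -/
open scoped Classical
open Finset Filter

/-- A chord diagram of size `n`: a fixed-point-free involution of the `2n`
endpoints `0, 1, …, 2n-1` (endpoint `i` here corresponds to the label `i+1`). -/
abbrev ChordDiagram (n : ℕ) :=
  {f : Fin (2*n) → Fin (2*n) // (∀ i, f (f i) = i) ∧ ∀ i, f i ≠ i}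

/-- `c` lies strictly between `a` and `b`. -/
def Between {m : ℕ} (a b c : Fin m) : Prop := min a b < c ∧ c < max a b

/-- The chord of `C` containing endpoint `x` crosses the chord containing endpoint `u`:
exactly one of the two endpoints `u`, `C u` lies strictly between `x` and `C x`. -/
def Crosses {n : ℕ} (C : ChordDiagram n) (x u : Fin (2*n)) : Prop :=
  Xor' (Between x (C.1 x) u) (Between x (C.1 x) (C.1 u))

/-- Uniform probability of an event over all chord diagrams of size `n`. -/
noncomputable def prob (n : ℕ) (E : ChordDiagram n → Prop) : ℝ :=
  ((Finset.univ.filter E).card : ℝ) / ((Finset.univ : Finset (ChordDiagram n)).card : ℝ)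

/-- The degree of the chord of `C` containing endpoint `x`: the number of chords
crossing it (each chord counted once via its smaller endpoint). -/
noncomputable def chordDegree {n : ℕ} (C : ChordDiagram n) (x : Fin (2*n)) : ℕ :=
  (Finset.univ.filter fun u => u < C.1 u ∧ Crosses C x u).card

/-- The length of the chord of `C` containing endpoint `x`: the number of endpoints
on the smaller of the two arcs it determines. -/
def chordLength {n : ℕ} (C : ChordDiagram n) (x : Fin (2*n)) : ℕ :=
  min (max (x:ℕ) (C.1 x : ℕ) - min (x:ℕ) (C.1 x : ℕ) - 1)
      (2*n - (max (x:ℕ) (C.1 x : ℕ) - min (x:ℕ) (C.1 x : ℕ)) - 1)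

/-- Degree of the chord containing endpoint `1` (index `0`). -/
noncomputable def degreeC1 (n : ℕ) (C : ChordDiagram n) : ℕ :=
  if h : 0 < n then chordDegree C ⟨0, by omega⟩ else 0

/-- Length of the chord containing endpoint `1` (index `0`). -/
noncomputable def lengthC1 (n : ℕ) (C : ChordDiagram n) : ℕ :=
  if h : 0 < n then chordLength C ⟨0, by omega⟩ else 0

/-- Membership in the component (w.r.t. the crossing relation) of the chord
containing the root endpoint. -/
def InRootComponent {n : ℕ} (C : ChordDiagram n) (root x : Fin (2*n)) : Prop :=
  x = root ∨ x = C.1 root ∨ Relation.ReflTransGen (fun a b => Crosses C a b) root x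

/-- The chord containing `x` is simple: it joins two (cyclically) consecutive endpoints. -/
def IsSimple {n : ℕ} (C : ChordDiagram n) (x : Fin (2*n)) : Prop :=
  (C.1 x : ℕ) = ((x : ℕ) + 1) % (2*n) ∨ (x : ℕ) = ((C.1 x : ℕ) + 1) % (2*n)

/-- `C` is monolithic (with respect to `root`): every chord not in the root
component is simple, and no two simple chords are next to each other. -/
def Monolithic {n : ℕ} (C : ChordDiagram n) (root : Fin (2*n)) : Prop :=
  (∀ x : Fin (2*n), ¬ InRootComponent C root x → IsSimple C x) ∧
  ¬ ∃ i : Fin (2*n), (C.1 i : ℕ) = ((i : ℕ) + 1) % (2*n) ∧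
      ∃ j : Fin (2*n), (j : ℕ) = ((i : ℕ) + 2) % (2*n) ∧ (C.1 j : ℕ) = ((i : ℕ) + 3) % (2*n)

/-- `L_j`: the number of chords of length `j` in `C`. -/
noncomputable def lengthCount (n : ℕ) (j : ℕ) (C : ChordDiagram n) : ℕ :=
  (Finset.univ.filter fun x : Fin (2*n) => x < C.1 x ∧ chordLength C x = j).card

/-- The endpoints of chords of `C` of length at least `k`. -/
noncomputable def lenAtLeast (n k : ℕ) (C : ChordDiagram n) : Finset (Fin (2*n)) :=
  Finset.univ.filter fun x => k ≤ chordLength C x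

/-- The number of chords with endpoints in `S` crossing the chord containing `x`. -/
noncomputable def degreeIn {n : ℕ} (C : ChordDiagram n) (S : Finset (Fin (2*n)))
    (x : Fin (2*n)) : ℕ :=
  (S.filter fun u => u < C.1 u ∧ Crosses C x u).card

/-- `S` (a chord-closed set of endpoints) is a set of chords each crossing at
least `k` other chords of `S`. -/
def IsCore {n : ℕ} (C : ChordDiagram n) (k : ℕ) (S : Finset (Fin (2*n))) : Prop :=
  (∀ x ∈ S, C.1 x ∈ S) ∧ ∀ x ∈ S, k ≤ degreeIn C S x

/-- The `k`-core: the union of all sets of chords in which every chord crosses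
at least `k` other chords of the set. -/
noncomputable def kCore (n k : ℕ) (C : ChordDiagram n) : Finset (Fin (2*n)) :=
  Finset.univ.filter fun x => ∃ S : Finset (Fin (2*n)), IsCore C k S ∧ x ∈ S

/-- The number of chords in the `k`-core of `C`. -/
noncomputable def kCoreSize (n k : ℕ) (C : ChordDiagram n) : ℕ :=
  ((kCore n k C).filter fun x => x < C.1 x).card

/-- `Z_k`: the number of chords of length strictly less than `k`. -/
noncomputable def shortCount (n k : ℕ) (C : ChordDiagram n) : ℕ :=
  (Finset.univ.filter fun x : Fin (2*n) => x < C.1 x ∧ chordLength C x < k).card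

/-- `C` contains a balanced clique of size `m`: a set of `m` pairwise crossing
chords with exactly one endpoint in each of the `2m` blocks of length `⌊n/m⌋`. -/
def HasBalancedClique (n m : ℕ) (C : ChordDiagram n) : Prop :=
  ∃ S : Finset (Fin (2*n)),
    (∀ x ∈ S, C.1 x ∈ S) ∧
    (∀ x ∈ S, ∀ u ∈ S, u ≠ x → u ≠ C.1 x → Crosses C x u) ∧
    (∀ t : ℕ, 1 ≤ t → t ≤ 2*m →
      (S.filter fun x => (t-1) * (n/m) ≤ (x:ℕ) ∧ (x:ℕ) < t * (n/m)).card = 1)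

/-- An oriented chord diagram: a chord diagram together with auxiliary fair-coin
bits; the bit attached to a crossing pair of chords (indexed by their smaller
endpoints) decides which chord over-crosses the other. -/
abbrev OrientedChordDiagram (n : ℕ) := ChordDiagram n × (Fin (2*n) → Fin (2*n) → Bool)

/-- The smaller endpoint of the chord of `C` containing `x`. -/
def chordRep {n : ℕ} (C : ChordDiagram n) (x : Fin (2*n)) : Fin (2*n) := min x (C.1 x)

/-- In the oriented diagram `D`, the chord containing `x` crosses and
over-crosses the chord containing `u`. -/
def OverD {n : ℕ} (D : OrientedChordDiagram n) (x u : Fin (2*n)) : Prop :=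
  Crosses D.1 x u ∧
    ((chordRep D.1 x ≤ chordRep D.1 u ∧ D.2 (chordRep D.1 x) (chordRep D.1 u) = true) ∨
     (chordRep D.1 u < chordRep D.1 x ∧ D.2 (chordRep D.1 u) (chordRep D.1 x) = false))

/-- Uniform probability of an event over all oriented chord diagrams of size `n`
(this yields a uniformly random diagram with each crossing oriented by an
independent fair coin). -/
noncomputable def probD (n : ℕ) (E : OrientedChordDiagram n → Prop) : ℝ :=
  ((Finset.univ.filter E).card : ℝ) /
    ((Finset.univ : Finset (OrientedChordDiagram n)).card : ℝ)

/-- The chords (given by their endpoints in `S`) are strongly connected in the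
directed intersection graph of `D`, using only chords of `S`. -/
def StronglyConnectedIn {n : ℕ} (D : OrientedChordDiagram n) (S : Set (Fin (2*n))) : Prop :=
  ∀ c ∈ S, ∀ d ∈ S,
    Relation.ReflTransGen (fun a b => a ∈ S ∧ b ∈ S ∧ OverD D a b) c d

/-- The number of chords with both endpoints in the cyclic block
`{i, i+1, …, i+t-1}` (mod `2n`). -/
noncomputable def chordsInBlock (n : ℕ) (C : ChordDiagram n) (i t : ℕ) : ℕ :=
  (Finset.univ.filter fun x : Fin (2*n) => x < C.1 x ∧
    (∃ a < t, (x:ℕ) = (i + a) % (2*n)) ∧ (∃ a < t, ((C.1 x : ℕ)) = (i + a) % (2*n))).card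

/-- The chord of `x` reaches the chord of `u` in the directed intersection graph
(of the whole diagram); endpoints of the same chord represent the same vertex. -/
def ReachChord {n : ℕ} (D : OrientedChordDiagram n) (x u : Fin (2*n)) : Prop :=
  u = x ∨ u = D.1.1 x ∨ Relation.ReflTransGen (fun a b => OverD D a b) x u

/-- The chords of `x` and `u` lie in the same strong component. -/
def MutualReach {n : ℕ} (D : OrientedChordDiagram n) (x u : Fin (2*n)) : Prop :=
  ReachChord D x u ∧ ReachChord D u x

/-- The number of single-chord strong components of `D`. -/
noncomputable def singleCount (n : ℕ) (D : OrientedChordDiagram n) : ℕ :=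
  (Finset.univ.filter fun x : Fin (2*n) =>
    x < D.1.1 x ∧ ∀ u : Fin (2*n), u ≠ x → u ≠ D.1.1 x → ¬ MutualReach D x u).card


namespace KC

/-- Conjugation of a diagram by a permutation. -/
def conj {n : ℕ} (σ : Equiv.Perm (Fin (2*n))) (C : ChordDiagram n) : ChordDiagram n :=
  ⟨fun i => σ (C.1 (σ.symm i)), by
    refine ⟨fun i => ?_, fun i h => ?_⟩
    · simp [C.2.1]
    · apply C.2.2 (σ.symm i)
      rw [Equiv.eq_symm_apply]; exact h⟩

lemma conj_injective {n : ℕ} (σ : Equiv.Perm (Fin (2*n))) :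
    Function.Injective (conj (n := n) σ) := by
  intro C D h
  apply Subtype.ext
  funext i
  have := congrFun (congrArg Subtype.val h) (σ i)
  simpa [conj] using this

lemma conj_apply {n : ℕ} (σ : Equiv.Perm (Fin (2*n))) (C : ChordDiagram n) (i : Fin (2*n)) :
    (conj σ C).1 i = σ (C.1 (σ.symm i)) := rfl

lemma swap_card_le {n : ℕ} (Q : ChordDiagram n → Prop) (u v v' : Fin (2*n))
    (h1 : u ≠ v) (h2 : u ≠ v') (hQ : ∀ C, Q C → Q (conj (Equiv.swap v v') C)) :
    (univ.filter fun C => Q C ∧ C.1 u = v).card ≤ (univ.filter fun C => Q C ∧ C.1 u = v').card := by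
  apply Finset.card_le_card_of_injOn (conj (Equiv.swap v v'))
  · intro C hC
    simp only [coe_filter, mem_univ, true_and, Set.mem_ofPred_eq] at hC ⊢
    refine ⟨hQ C hC.1, ?_⟩
    rw [conj_apply, Equiv.symm_swap, Equiv.swap_apply_of_ne_of_ne h1 h2, hC.2,
      Equiv.swap_apply_left]
  · exact (conj_injective _).injOn

lemma fiber_card {n : ℕ} (Q : ChordDiagram n → Prop) (u : Fin (2*n)) (V : Finset (Fin (2*n)))
    (huV : u ∉ V) (hQV : ∀ C, Q C → C.1 u ∈ V)
    (hQ : ∀ v ∈ V, ∀ v' ∈ V, ∀ C, Q C → Q (conj (Equiv.swap v v') C)) (v : Fin (2*n))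
    (hv : v ∈ V) :
    (univ.filter fun C => Q C ∧ C.1 u = v).card * V.card = (univ.filter Q).card := by
  rw [Finset.card_eq_sum_card_fiberwise (s := univ.filter Q)
    (f := fun C : ChordDiagram n => C.1 u) (t := V)]
  · rw [Finset.sum_congr rfl (g := fun _ => (univ.filter fun C => Q C ∧ C.1 u = v).card)]
    · simp [mul_comm]
    · intro w hw
      rw [Finset.filter_filter]
      have h1 : u ≠ v := fun h => huV (h ▸ hv)
      have h2 : u ≠ w := fun h => huV (h ▸ hw)
      exact le_antisymm (swap_card_le Q u w v h2 h1 (hQ w hw v hv))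
        (swap_card_le Q u v w h1 h2 (hQ v hv w hw))
  · intro C hC
    simp at hC
    exact hQV C hC

lemma total_pos (n : ℕ) : 0 < (Finset.univ : Finset (ChordDiagram n)).card := by
  apply Finset.card_pos.mpr
  refine ⟨⟨fun i => Fin.rev i, fun i => Fin.rev_rev i, fun i h => ?_⟩, mem_univ _⟩
  have := congrArg Fin.val h
  simp [Fin.val_rev] at this
  omega

lemma prob_fiber {n : ℕ} (Q : ChordDiagram n → Prop) (u : Fin (2*n)) (V : Finset (Fin (2*n)))
    (huV : u ∉ V) (hQV : ∀ C, Q C → C.1 u ∈ V)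
    (hQ : ∀ v ∈ V, ∀ v' ∈ V, ∀ C, Q C → Q (conj (Equiv.swap v v') C)) (v : Fin (2*n))
    (hv : v ∈ V) :
    prob n (fun C => Q C ∧ C.1 u = v) = prob n Q / V.card := by
  have h := fiber_card Q u V huV hQV hQ v hv
  have hV : 0 < V.card := Finset.card_pos.mpr ⟨v, hv⟩
  have hT := total_pos n
  unfold prob
  rw [← h]
  push_cast
  have : (V.card : ℝ) ≠ 0 := by positivity
  field_simp
  congr!

lemma invol {n : ℕ} (C : ChordDiagram n) (x : Fin (2*n)) : C.1 (C.1 x) = x := C.2.1 x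
lemma nofix {n : ℕ} (C : ChordDiagram n) (x : Fin (2*n)) : C.1 x ≠ x := C.2.2 x

lemma prob_one {n : ℕ} (x y : Fin (2*n)) (h : x ≠ y) :
    prob n (fun C => C.1 x = y) = 1 / (2*n-1 : ℝ) := by
  have := prob_fiber (n := n) (fun _ => True) x (univ.erase x) (by simp)
    (fun C _ => by simp [nofix]) (fun _ _ _ _ _ _ => trivial) y (by simp [h.symm])
  simp only [true_and] at this
  rw [this]
  have hT := total_pos n
  have hn : 1 ≤ 2 * n := by have := x.2; omega
  rw [Finset.card_erase_of_mem (mem_univ _), Finset.card_univ, Fintype.card_fin,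
    Nat.cast_sub hn]
  push_cast
  congr 1
  unfold prob
  rw [Finset.filter_true]
  field_simp

lemma prob_two {n : ℕ} (x y u v : Fin (2*n)) (hxy : x ≠ y) (hxu : x ≠ u) (hyu : y ≠ u)
    (hxv : x ≠ v) (hyv : y ≠ v) (huv : u ≠ v) :
    prob n (fun C => C.1 x = y ∧ C.1 u = v) = 1 / ((2*n-1) * (2*n-3) : ℝ) := by
  have hV : ((univ : Finset (Fin (2*n))) \ {x, y, u}).card = 2 * n - 3 := by
    rw [Finset.card_sdiff_of_subset (subset_univ _), Finset.card_univ, Fintype.card_fin]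
    congr 1
    rw [Finset.card_insert_of_notMem (by simp [hxy, hxu]),
      Finset.card_insert_of_notMem (by simp [hyu]), Finset.card_singleton]
  have hn : 3 ≤ 2 * n := by
    have : ({x, y, u} : Finset (Fin (2*n))).card = 3 := by
      rw [Finset.card_insert_of_notMem (by simp [hxy, hxu]),
        Finset.card_insert_of_notMem (by simp [hyu]), Finset.card_singleton]
    calc 3 = _ := this.symm
      _ ≤ _ := Finset.card_le_univ _
      _ = _ := by simp
  rw [prob_fiber (n := n) (fun C => C.1 x = y) u (univ \ {x, y, u}) (by simp) ?_ ?_ v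
    (by simp [hxv.symm, hyv.symm, huv.symm]), prob_one x y hxy, hV, Nat.cast_sub hn]
  · push_cast
    rw [div_div]
  · intro C hC
    simp only [Finset.mem_sdiff, mem_univ, mem_insert, mem_singleton, true_and, not_or]
    refine ⟨fun h => ?_, fun h => ?_, nofix C u⟩
    · apply hyu; rw [← hC, ← h, invol]
    · apply hxu; rw [← invol C x, hC, ← h, invol]
  · intro a ha b hb C hC
    simp only [Finset.mem_sdiff, mem_univ, mem_insert, mem_singleton, true_and, not_or] at ha hb
    rw [conj_apply, Equiv.symm_swap, Equiv.swap_apply_of_ne_of_ne (Ne.symm ha.1) (Ne.symm hb.1), hC,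
      Equiv.swap_apply_of_ne_of_ne (Ne.symm ha.2.1) (Ne.symm hb.2.1)]

lemma prob_three {n : ℕ} (x y u v a b : Fin (2*n)) (hxy : x ≠ y) (hxu : x ≠ u) (hyu : y ≠ u)
    (hxv : x ≠ v) (hyv : y ≠ v) (huv : u ≠ v)
    (hax : a ≠ x) (hay : a ≠ y) (hau : a ≠ u) (hav : a ≠ v)
    (hbx : b ≠ x) (hby : b ≠ y) (hbu : b ≠ u) (hbv : b ≠ v) (hba : b ≠ a) :
    prob n (fun C => (C.1 x = y ∧ C.1 u = v) ∧ C.1 a = b)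
      = 1 / ((2*n-1) * (2*n-3) * (2*n-5) : ℝ) := by
  have h5 : ({x, y, u, v, a} : Finset (Fin (2*n))).card = 5 := by
    rw [Finset.card_insert_of_notMem (by simp [hxy, hxu, hxv, hax.symm]),
      Finset.card_insert_of_notMem (by simp [hyu, hyv, hay.symm]),
      Finset.card_insert_of_notMem (by simp [huv, hau.symm]),
      Finset.card_insert_of_notMem (by simp [hav.symm]), Finset.card_singleton]
  have hV : ((univ : Finset (Fin (2*n))) \ {x, y, u, v, a}).card = 2 * n - 5 := by
    rw [Finset.card_sdiff_of_subset (subset_univ _), Finset.card_univ, Fintype.card_fin, h5]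
  have hn : 5 ≤ 2 * n := by
    calc 5 = _ := h5.symm
      _ ≤ _ := Finset.card_le_univ _
      _ = _ := by simp
  rw [prob_fiber (n := n) (fun C => C.1 x = y ∧ C.1 u = v) a (univ \ {x, y, u, v, a})
    (by simp) ?_ ?_ b
    (by simp [hbx, hby, hbu, hbv, hba]), prob_two x y u v hxy hxu hyu hxv hyv huv, hV,
    Nat.cast_sub hn]
  · push_cast
    rw [div_div]
  · rintro C ⟨hC, hD⟩
    simp only [Finset.mem_sdiff, mem_univ, mem_insert, mem_singleton, true_and, not_or]
    refine ⟨fun h => ?_, fun h => ?_, fun h => ?_, fun h => ?_, nofix C a⟩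
    · apply hay; rw [← hC, ← h, invol]
    · apply hax; rw [← invol C x, hC, ← h, invol]
    · apply hav; rw [← hD, ← h, invol]
    · apply hau; rw [← invol C u, hD, ← h, invol]
  · rintro c hc d hd C ⟨hC, hD⟩
    simp only [Finset.mem_sdiff, mem_univ, mem_insert, mem_singleton, true_and, not_or] at hc hd
    constructor
    · rw [conj_apply, Equiv.symm_swap, Equiv.swap_apply_of_ne_of_ne (Ne.symm hc.1) (Ne.symm hd.1),
        hC, Equiv.swap_apply_of_ne_of_ne (Ne.symm hc.2.1) (Ne.symm hd.2.1)]
    · rw [conj_apply, Equiv.symm_swap,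
        Equiv.swap_apply_of_ne_of_ne (Ne.symm hc.2.2.1) (Ne.symm hd.2.2.1),
        hD, Equiv.swap_apply_of_ne_of_ne (Ne.symm hc.2.2.2.1) (Ne.symm hd.2.2.2.1)]


/-- Expectation of a function of the uniform chord diagram. -/
noncomputable def ex (n : ℕ) (f : ChordDiagram n → ℝ) : ℝ :=
  (∑ C, f C) / ((Finset.univ : Finset (ChordDiagram n)).card : ℝ)

lemma prob_eq_ex (n : ℕ) (E : ChordDiagram n → Prop) [DecidablePred E] :
    prob n E = ex n (fun C => if E C then 1 else 0) := by
  unfold prob ex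
  congr 1
  rw [Finset.sum_boole]
  congr!

lemma ex_mono {n : ℕ} {f g : ChordDiagram n → ℝ} (h : ∀ C, f C ≤ g C) : ex n f ≤ ex n g := by
  unfold ex
  gcongr
  exact h _

lemma ex_add {n : ℕ} (f g : ChordDiagram n → ℝ) :
    ex n (fun C => f C + g C) = ex n f + ex n g := by
  unfold ex
  rw [Finset.sum_add_distrib, add_div]

lemma ex_mul {n : ℕ} (c : ℝ) (f : ChordDiagram n → ℝ) :
    ex n (fun C => c * f C) = c * ex n f := by
  unfold ex
  rw [← Finset.mul_sum, mul_div_assoc]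

lemma ex_const {n : ℕ} (c : ℝ) : ex n (fun _ => c) = c := by
  unfold ex
  have := total_pos n
  simp only [Finset.sum_const, nsmul_eq_mul]
  field_simp

lemma ex_sum {n : ℕ} {ι : Type*} (s : Finset ι) (f : ι → ChordDiagram n → ℝ) :
    ex n (fun C => ∑ i ∈ s, f i C) = ∑ i ∈ s, ex n (f i) := by
  unfold ex
  rw [Finset.sum_comm, Finset.sum_div]

lemma prob_nonneg (n : ℕ) (E : ChordDiagram n → Prop) : 0 ≤ prob n E := by
  unfold prob; positivity

lemma prob_mono {n : ℕ} {E F : ChordDiagram n → Prop} (h : ∀ C, E C → F C) :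
    prob n E ≤ prob n F := by
  rw [prob_eq_ex, prob_eq_ex]
  apply ex_mono
  intro C
  by_cases hE : E C
  · simp [hE, h C hE]
  · simp only [hE, if_false]; split_ifs <;> norm_num

lemma prob_or_le {n : ℕ} (E F : ChordDiagram n → Prop) :
    prob n (fun C => E C ∨ F C) ≤ prob n E + prob n F := by
  rw [prob_eq_ex, prob_eq_ex, prob_eq_ex, ← ex_add]
  apply ex_mono
  intro C
  by_cases hE : E C <;> by_cases hF : F C <;> simp [hE, hF]

lemma prob_exists_le {n : ℕ} {ι : Type*} (s : Finset ι) (E : ι → ChordDiagram n → Prop) :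
    prob n (fun C => ∃ i ∈ s, E i C) ≤ ∑ i ∈ s, prob n (E i) := by
  simp_rw [prob_eq_ex]
  rw [← ex_sum]
  apply ex_mono
  intro C
  split_ifs with h
  · obtain ⟨i, hi, hE⟩ := h
    have := Finset.single_le_sum (f := fun i => if E i C then (1:ℝ) else 0) (s := s)
      (fun j _ => by positivity) hi
    simpa [hE] using this
  · apply Finset.sum_nonneg
    intro j _; positivity

lemma markov {n : ℕ} (E : ChordDiagram n → Prop) (f : ChordDiagram n → ℝ) (a : ℝ) (ha : 0 < a)
    (h0 : ∀ C, 0 ≤ f C) (h : ∀ C, E C → a ≤ f C) : prob n E ≤ ex n f / a := by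
  rw [le_div_iff₀ ha, mul_comm, prob_eq_ex, ← ex_mul]
  apply ex_mono
  intro C
  split_ifs with hE
  · simpa using h C hE
  · simpa using h0 C

/-- The number of pairs of `E` which are chords of `C`. -/
noncomputable def cnt {n : ℕ} (E : Finset (Fin (2*n) × Fin (2*n))) (C : ChordDiagram n) : ℕ :=
  (E.filter fun e => C.1 e.1 = e.2).card

lemma cnt_eq {n : ℕ} (E : Finset (Fin (2*n) × Fin (2*n))) (C : ChordDiagram n) :
    (cnt E C : ℝ) = ∑ e ∈ E, if C.1 e.1 = e.2 then (1:ℝ) else 0 := by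
  rw [Finset.sum_boole]; rfl

lemma ex_cnt {n : ℕ} (E : Finset (Fin (2*n) × Fin (2*n))) (hE : ∀ e ∈ E, e.1 ≠ e.2) :
    ex n (fun C => (cnt E C : ℝ)) = E.card / (2*n-1 : ℝ) := by
  simp_rw [cnt_eq]
  rw [ex_sum]
  rw [Finset.sum_congr rfl (g := fun _ => 1 / (2*n-1 : ℝ))]
  · simp [div_eq_mul_inv]
  · intro e he
    rw [← prob_one e.1 e.2 (hE e he), prob_eq_ex]

lemma ex_cnt_sq {n : ℕ} (hn : 3 ≤ n) (E : Finset (Fin (2*n) × Fin (2*n)))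
    (hE : ∀ e ∈ E, e.1 ≠ e.2)
    (hE' : ∀ e ∈ E, (e.2, e.1) ∉ E) :
    ex n (fun C => (cnt E C : ℝ)^2) ≤ E.card / (2*n-1 : ℝ)
      + (E.card : ℝ)^2 / ((2*n-1) * (2*n-3) : ℝ) := by
  have hn' : (3:ℝ) ≤ n := by exact_mod_cast hn
  have e1 : ∀ C : ChordDiagram n, (cnt E C : ℝ)^2 =
      ∑ e ∈ E, ∑ f ∈ E, if (C.1 e.1 = e.2 ∧ C.1 f.1 = f.2) then (1:ℝ) else 0 := by
    intro C
    rw [cnt_eq, sq, Finset.sum_mul_sum]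
    refine Finset.sum_congr rfl fun e _ => Finset.sum_congr rfl fun f _ => ?_
    by_cases h1 : C.1 e.1 = e.2 <;> by_cases h2 : C.1 f.1 = f.2 <;> simp [h1, h2]
  simp_rw [e1]
  rw [ex_sum]
  simp_rw [ex_sum]
  have key : ∀ e ∈ E, ∀ f ∈ E,
      ex n (fun C => if (C.1 e.1 = e.2 ∧ C.1 f.1 = f.2) then (1:ℝ) else 0)
      ≤ (if e = f then 1 / (2*n-1 : ℝ) else 0) + 1 / ((2*n-1) * (2*n-3) : ℝ) := by
    intro e he f hf
    have hp : 0 ≤ 1 / ((2*n-1) * (2*n-3) : ℝ) := by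
      apply div_nonneg zero_le_one
      apply mul_nonneg <;> linarith
    by_cases hef : e = f
    · subst hef
      simp only [and_self, if_true]
      rw [← prob_one e.1 e.2 (hE e he), prob_eq_ex]
      linarith
    · simp only [hef, if_false, zero_add]
      by_cases hd : e.1 ≠ f.1 ∧ e.2 ≠ f.1 ∧ e.1 ≠ f.2 ∧ e.2 ≠ f.2
      · rw [← prob_two e.1 e.2 f.1 f.2 (hE e he) hd.1 hd.2.1 hd.2.2.1 hd.2.2.2 (hE f hf),
          prob_eq_ex]
      · refine le_trans (le_of_eq ?_) hp
        refine Eq.trans ?_ (ex_const (n := n) 0)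
        congr 1
        funext C
        rw [if_neg]
        rintro ⟨h1, h2⟩
        apply hd
        refine ⟨fun h => ?_, fun h => ?_, fun h => ?_, fun h => ?_⟩
        · exact hef (Prod.ext h (by rw [← h1, ← h2, h]))
        · apply hE' e he
          have : (e.2, e.1) = f := Prod.ext h (by rw [← h2, ← h, ← h1, invol])
          rw [this]; exact hf
        · apply hE' e he
          have : (e.2, e.1) = f := Prod.ext (by rw [← h1, h, ← h2, invol]) h
          rw [this]; exact hf
        · refine hef (Prod.ext ?_ h)
          rw [← invol C e.1, h1, h, ← h2, invol]
  calc _ ≤ ∑ e ∈ E, ∑ f ∈ E, ((if e = f then 1 / (2*n-1 : ℝ) else 0)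
        + 1 / ((2*n-1) * (2*n-3) : ℝ)) :=
        Finset.sum_le_sum fun e he => Finset.sum_le_sum fun f hf => key e he f hf
    _ = _ := by
        simp only [Finset.sum_add_distrib, Finset.sum_ite_eq, Finset.sum_const, nsmul_eq_mul]
        rw [Finset.sum_ite_mem, Finset.inter_self]
        simp only [Finset.sum_const, nsmul_eq_mul]
        ring

lemma chebyshev {n : ℕ} (hn : 3 ≤ n) (E : Finset (Fin (2*n) × Fin (2*n)))
    (hE : ∀ e ∈ E, e.1 ≠ e.2)
    (hE' : ∀ e ∈ E, (e.2, e.1) ∉ E) (μ t : ℝ) (hμ : μ = E.card / (2*n-1 : ℝ)) (ht : 0 < t) :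
    prob n (fun C => t ≤ |(cnt E C : ℝ) - μ|) ≤ (μ + 2 * μ^2 / n) / t^2 := by
  have hn' : (3:ℝ) ≤ n := by exact_mod_cast hn
  have h := markov (fun C => t ≤ |(cnt E C : ℝ) - μ|) (fun C => ((cnt E C : ℝ) - μ)^2) (t^2)
    (by positivity) (fun C => sq_nonneg _) (fun C hC => by
      rw [← sq_abs ((cnt E C : ℝ) - μ)]
      gcongr)
  refine h.trans ?_
  gcongr
  have e1 : ex n (fun C => ((cnt E C : ℝ) - μ)^2) =
      ex n (fun C => (cnt E C : ℝ)^2) + (-(2 * μ)) * ex n (fun C => (cnt E C : ℝ)) + μ^2 := by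
    rw [← ex_mul, ← ex_add, ← ex_const (n := n) (μ^2), ← ex_add]
    congr 1
    funext C
    ring
  rw [e1, ex_cnt E hE, ← hμ]
  have h2 := ex_cnt_sq hn E hE hE'
  rw [← hμ] at h2
  have p1 : (0:ℝ) < 2*n-1 := by linarith
  have p3 : (0:ℝ) < 2*n-3 := by linarith
  have e2 : (E.card : ℝ)^2 / ((2*n-1) * (2*n-3) : ℝ) = μ^2 + 2 * μ^2 / (2*n-3) := by
    rw [hμ]; field_simp; ring
  have e3 : 2 * μ^2 / (2*n-3) ≤ 2 * μ^2 / n := by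
    gcongr; linarith
  rw [e2] at h2
  nlinarith


/-- Length of a potential chord. -/
def clen {n : ℕ} (u v : Fin (2*n)) : ℕ :=
  min (max (u:ℕ) (v : ℕ) - min (u:ℕ) (v : ℕ) - 1)
      (2*n - (max (u:ℕ) (v : ℕ) - min (u:ℕ) (v : ℕ)) - 1)

lemma chordLength_eq {n : ℕ} (C : ChordDiagram n) (x : Fin (2*n)) :
    chordLength C x = clen x (C.1 x) := rfl

lemma clen_comm {n : ℕ} (u v : Fin (2*n)) : clen u v = clen v u := by
  unfold clen
  rw [max_comm, min_comm (u:ℕ) v]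

lemma chordLength_C {n : ℕ} (C : ChordDiagram n) (x : Fin (2*n)) :
    chordLength C (C.1 x) = chordLength C x := by
  rw [chordLength_eq, chordLength_eq, invol, clen_comm]

lemma between_iff {m : ℕ} (a b c : Fin m) :
    Between a b c ↔ min (a:ℕ) b < c ∧ (c:ℕ) < max (a:ℕ) b := by
  unfold Between
  simp only [min_lt_iff, lt_max_iff, Fin.lt_def]

/-- The smaller arc. -/
noncomputable def arc {n : ℕ} (x y : Fin (2*n)) : Finset (Fin (2*n)) :=
  univ.filter fun u => u ≠ x ∧ u ≠ y ∧
    (if max (x:ℕ) (y : ℕ) - min (x:ℕ) (y : ℕ) ≤ n then Between x y u else ¬ Between x y u)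

lemma mem_arc {n : ℕ} (x y u : Fin (2*n)) : u ∈ arc x y ↔
    (u:ℕ) ≠ x ∧ (u:ℕ) ≠ y ∧
    ((max (x:ℕ) (y : ℕ) - min (x:ℕ) (y : ℕ) ≤ n ∧
      (min (x:ℕ) y < u ∧ (u:ℕ) < max (x:ℕ) y)) ∨
     (n < max (x:ℕ) (y : ℕ) - min (x:ℕ) (y : ℕ) ∧
      ¬ (min (x:ℕ) y < u ∧ (u:ℕ) < max (x:ℕ) y))) := by
  unfold arc
  rw [Finset.mem_filter]
  simp only [mem_univ, true_and, between_iff, ne_eq, Fin.ext_iff]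
  split_ifs with h
  · simp only [h, true_and]
    omega
  · omega

lemma card_between {m : ℕ} (a b : ℕ) (hb : b < m) :
    (univ.filter fun u : Fin m => a < (u:ℕ) ∧ (u:ℕ) < b).card = b - a - 1 := by
  rw [← Nat.card_Ioo a b]
  apply Finset.card_bij (fun (u : Fin m) _ => (u:ℕ))
  · intro u hu; simpa using hu
  · intro u _ v _ h; exact Fin.ext h
  · intro c hc
    simp at hc
    exact ⟨⟨c, by omega⟩, by simpa using hc, rfl⟩

lemma card_arc {n : ℕ} (x y : Fin (2*n)) (h : x ≠ y) : (arc x y).card = clen x y := by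
  have hx := x.2
  have hy := y.2
  have hxy : (x:ℕ) ≠ y := fun h' => h (Fin.ext h')
  have hc := card_between (m := 2*n) (min (x:ℕ) y) (max (x:ℕ) y) (by omega)
  by_cases hd : max (x:ℕ) (y : ℕ) - min (x:ℕ) (y : ℕ) ≤ n
  · have : arc x y = univ.filter fun u : Fin (2*n) => min (x:ℕ) y < (u:ℕ) ∧ (u:ℕ) < max (x:ℕ) y := by
      ext u
      rw [mem_arc, Finset.mem_filter]
      simp only [mem_univ, true_and]
      omega
    rw [this, hc]
    unfold clen
    omega
  · have : arc x y = univ \ (insert x (insert y (univ.filter fun u : Fin (2*n) =>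
        min (x:ℕ) y < (u:ℕ) ∧ (u:ℕ) < max (x:ℕ) y))) := by
      ext u
      rw [mem_arc, Finset.mem_sdiff]
      simp only [mem_univ, true_and, Finset.mem_insert, Finset.mem_filter, Fin.ext_iff]
      omega
    rw [this, Finset.card_sdiff_of_subset (subset_univ _), Finset.card_insert_of_notMem,
      Finset.card_insert_of_notMem, hc, Finset.card_univ, Fintype.card_fin]
    · unfold clen; omega
    · simp only [Finset.mem_filter, mem_univ, true_and]; omega
    · simp only [Finset.mem_insert, h, false_or, Finset.mem_filter, mem_univ, true_and]; omega

lemma clen_lt_of_mem_arc {n : ℕ} (x y u v : Fin (2*n)) (hu : u ∈ arc x y) (hv : v ∈ arc x y) :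
    clen u v < clen x y := by
  rw [mem_arc] at hu hv
  unfold clen
  have := u.2
  have := v.2
  have := x.2
  have := y.2
  omega

lemma crosses_def {n : ℕ} (C : ChordDiagram n) (x u : Fin (2*n)) : Crosses C x u ↔
    (Between x (C.1 x) u ∧ ¬ Between x (C.1 x) (C.1 u)) ∨
    (Between x (C.1 x) (C.1 u) ∧ ¬ Between x (C.1 x) u) := Iff.rfl

lemma crosses_iff {n : ℕ} (C : ChordDiagram n) (x u : Fin (2*n)) (h1 : u ≠ x) (h2 : u ≠ C.1 x) :
    Crosses C x u ↔ ((u ∈ arc x (C.1 x) ∧ C.1 u ∉ arc x (C.1 x)) ∨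
      (u ∉ arc x (C.1 x) ∧ C.1 u ∈ arc x (C.1 x))) := by
  have h3 : C.1 u ≠ x := fun h => h2 (by rw [← h, invol])
  have h4 : C.1 u ≠ C.1 x := fun h => h1 (by rw [← invol C u, h, invol])
  have h1' : (u:ℕ) ≠ x := fun h' => h1 (Fin.ext h')
  have h2' : (u:ℕ) ≠ C.1 x := fun h' => h2 (Fin.ext h')
  have h3' : (C.1 u:ℕ) ≠ x := fun h' => h3 (Fin.ext h')
  have h4' : (C.1 u:ℕ) ≠ C.1 x := fun h' => h4 (Fin.ext h')
  simp only [crosses_def, between_iff, mem_arc]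
  omega

lemma not_crosses_self {n : ℕ} (C : ChordDiagram n) (x u : Fin (2*n)) (h : Crosses C x u) :
    u ≠ x ∧ u ≠ C.1 x := by
  constructor
  · rintro rfl
    simp only [crosses_def, between_iff] at h
    omega
  · rintro rfl
    simp only [crosses_def, between_iff, invol] at h
    omega

lemma crosses_C {n : ℕ} (C : ChordDiagram n) (x u : Fin (2*n)) :
    Crosses C x (C.1 u) ↔ Crosses C x u := by
  simp only [crosses_def, invol]
  tauto

lemma degreeIn_le {n : ℕ} (C : ChordDiagram n) (S : Finset (Fin (2*n))) (x : Fin (2*n)) :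
    degreeIn C S x ≤ chordLength C x := by
  rw [chordLength_eq, ← card_arc x (C.1 x) (nofix C x).symm]
  unfold degreeIn
  apply Finset.card_le_card_of_injOn (fun u => if u ∈ arc x (C.1 x) then u else C.1 u)
  · intro u hu
    simp only [coe_filter, Set.mem_ofPred_eq] at hu
    have hs := not_crosses_self C x u hu.2.2
    have := (crosses_iff C x u hs.1 hs.2).1 hu.2.2
    simp only [Finset.mem_coe]
    split_ifs with h
    · exact h
    · tauto
  · intro u hu v hv huv
    simp only [coe_filter, Set.mem_ofPred_eq] at hu hv
    have a1 := hu.2.1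
    have a2 := hv.2.1
    simp only at huv
    split_ifs at huv with h1 h2 h2
    · exact huv
    · subst huv; rw [invol] at a1; exact absurd a1 (lt_asymm a2)
    · subst huv; rw [invol] at a2; exact absurd a1 (lt_asymm a2)
    · rw [← invol C u, huv, invol]

lemma degreeIn_ge {n : ℕ} (C : ChordDiagram n) (S T : Finset (Fin (2*n))) (x : Fin (2*n))
    (hS : ∀ u ∈ S, C.1 u ∈ S) (hTS : T ⊆ S) (hT : ∀ u ∈ T, C.1 u ∉ T)
    (hX : ∀ u ∈ T, Crosses C x u) : T.card ≤ degreeIn C S x := by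
  unfold degreeIn
  apply Finset.card_le_card_of_injOn (fun u => if u < C.1 u then u else C.1 u)
  · intro u hu
    simp only [coe_filter, Set.mem_ofPred_eq]
    split_ifs with h
    · exact ⟨hTS hu, h, hX u hu⟩
    · refine ⟨hS u (hTS hu), ?_, (crosses_C C x u).2 (hX u hu)⟩
      rw [invol]
      exact lt_of_le_of_ne (not_lt.1 h) (nofix C u)
  · intro u hu v hv huv
    simp only at huv
    split_ifs at huv with h1 h2 h2
    · exact huv
    · subst huv; exact absurd hu (hT v hv)
    · subst huv; exact absurd hv (hT u hu)
    · rw [← invol C u, huv, invol]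

lemma card_half {n : ℕ} (C : ChordDiagram n) (S : Finset (Fin (2*n))) (hS : ∀ u ∈ S, C.1 u ∈ S) :
    S.card = 2 * (S.filter fun x => x < C.1 x).card := by
  have h := Finset.card_filter_add_card_filter_not (s := S) (fun x => x < C.1 x)
  suffices h2 : (S.filter fun x => ¬ x < C.1 x).card = (S.filter fun x => x < C.1 x).card by omega
  apply Finset.card_bij (fun u _ => C.1 u)
  · intro u hu
    simp only [Finset.mem_filter, invol] at hu ⊢
    exact ⟨hS u hu.1, lt_of_le_of_ne (not_lt.1 hu.2) (nofix C u)⟩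
  · intro u _ v _ h
    rw [← invol C u, h, invol]
  · intro u hu
    simp only [Finset.mem_filter] at hu
    refine ⟨C.1 u, ?_, invol C u⟩
    simp only [Finset.mem_filter, invol]
    exact ⟨hS u hu.1, lt_asymm hu.2⟩

lemma card_rep {n : ℕ} (C : ChordDiagram n) :
    (univ.filter fun x : Fin (2*n) => x < C.1 x).card = n := by
  have := card_half C univ (fun _ _ => mem_univ _)
  rw [Finset.card_univ, Fintype.card_fin] at this
  omega

lemma kCoreSize_add_le {n : ℕ} (k : ℕ) (C : ChordDiagram n) :
    kCoreSize n k C + shortCount n k C ≤ n := by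
  conv_rhs => rw [← card_rep C]
  unfold kCoreSize shortCount
  rw [← Finset.card_union_of_disjoint]
  · apply Finset.card_le_card
    intro x hx
    simp only [Finset.mem_union, Finset.mem_filter, mem_univ, true_and] at hx ⊢
    tauto
  · rw [Finset.disjoint_left]
    intro x hx hx'
    simp only [kCore, Finset.mem_filter, mem_univ, true_and] at hx hx'
    obtain ⟨⟨S, hS, hxS⟩, _⟩ := hx
    have := hS.2 x hxS
    have := degreeIn_le C S x
    omega

lemma le_kCoreSize_add {n : ℕ} (k r : ℕ) (C : ChordDiagram n) (h : IsCore C k (lenAtLeast n r C)) :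
    n ≤ kCoreSize n k C + shortCount n r C := by
  conv_lhs => rw [← card_rep C]
  unfold kCoreSize shortCount
  refine le_trans (Finset.card_le_card ?_) (Finset.card_union_le _ _)
  intro x hx
  simp only [kCore, Finset.mem_union, Finset.mem_filter, mem_univ, true_and] at hx ⊢
  by_cases hl : chordLength C x < r
  · right; exact ⟨hx, hl⟩
  · left
    refine ⟨⟨_, h, ?_⟩, hx⟩
    simp only [lenAtLeast, Finset.mem_filter, mem_univ, true_and]
    omega

/-- The potential short chords. -/
noncomputable def shortE (n r : ℕ) : Finset (Fin (2*n) × Fin (2*n)) :=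
  univ.filter fun e => e.1 < e.2 ∧ clen e.1 e.2 < r

lemma shortCount_eq {n : ℕ} (r : ℕ) (C : ChordDiagram n) :
    shortCount n r C = cnt (shortE n r) C := by
  unfold shortCount cnt shortE
  apply Finset.card_bij (fun x _ => (x, C.1 x))
  · intro x hx
    have h := (Finset.mem_filter.1 hx).2
    exact Finset.mem_filter.2 ⟨Finset.mem_filter.2 ⟨mem_univ _, h⟩, rfl⟩
  · intro x _ y _ h
    exact congrArg Prod.fst h
  · rintro ⟨x, y⟩ h
    simp only [Finset.mem_filter, mem_univ, true_and] at h
    obtain ⟨h1, h2⟩ := h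
    subst h2
    exact ⟨x, Finset.mem_filter.2 ⟨mem_univ _, h1⟩, rfl⟩

lemma card_shortE {n r : ℕ} (h : r < n) : (shortE n r).card = 2 * n * r := by
  have : (univ : Finset (Fin (2*n) × Fin r)).card = 2 * n * r := by simp
  rw [← this]
  symm
  apply Finset.card_bij (fun (p : Fin (2*n) × Fin r) _ =>
    if hp : (p.1:ℕ) + p.2 + 1 < 2 * n then (p.1, (⟨(p.1:ℕ) + p.2 + 1, hp⟩ : Fin (2*n)))
    else ((⟨(p.1:ℕ) + p.2 + 1 - 2*n, by have := p.1.2; have := p.2.2; omega⟩ : Fin (2*n)), p.1))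
  · rintro ⟨u, d⟩ _
    have := u.2
    have := d.2
    unfold shortE clen
    simp only [Finset.mem_filter, mem_univ, true_and]
    split_ifs with hp
    · simp only [Fin.lt_def]; omega
    · simp only [Fin.lt_def]; omega
  · rintro ⟨u, d⟩ _ ⟨u', d'⟩ _ hh
    have := u.2
    have := d.2
    have := u'.2
    have := d'.2
    simp only at hh
    split_ifs at hh <;> simp only [Prod.mk.injEq, Fin.ext_iff] at hh ⊢ <;> omega
  · rintro ⟨u, v⟩ he
    have hu := u.2
    have hv := v.2
    unfold shortE clen at he
    simp only [Finset.mem_filter, mem_univ, true_and, Fin.lt_def] at he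
    by_cases hd : (v:ℕ) - u ≤ r
    · refine ⟨(u, ⟨(v:ℕ) - u - 1, by omega⟩), mem_univ _, ?_⟩
      have : (u:ℕ) + (v - u - 1) + 1 < 2 * n := by omega
      simp only [this, dif_pos, Prod.mk.injEq, Fin.ext_iff, true_and]
      omega
    · refine ⟨(v, ⟨(u:ℕ) + 2 * n - v - 1, by omega⟩), mem_univ _, ?_⟩
      have : ¬ ((v:ℕ) + ((u:ℕ) + 2 * n - v - 1) + 1 < 2 * n) := by omega
      simp only [this, dif_neg, not_false_eq_true, Prod.mk.injEq, Fin.ext_iff, and_true]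
      omega

lemma card_near {n : ℕ} (u : Fin (2*n)) (r : ℕ) :
    (univ.filter fun v : Fin (2*n) => v ≠ u ∧ clen u v ≤ r).card ≤ 2 * (r + 1) := by
  have hu := u.2
  have : (Finset.Icc 1 (r+1) ∪ Finset.Icc (2*n - r - 1) (2*n-1)).card ≤ 2 * (r+1) := by
    refine (Finset.card_union_le _ _).trans ?_
    simp only [Nat.card_Icc]
    omega
  refine le_trans ?_ this
  apply Finset.card_le_card_of_injOn (fun v : Fin (2*n) => if (u:ℕ) ≤ v then (v:ℕ) - u else v + 2 * n - u)
  · intro v hv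
    have hv2 := v.2
    simp only [coe_filter, mem_univ, true_and, Set.mem_ofPred_eq, clen, ne_eq, Fin.ext_iff] at hv
    simp only [Finset.coe_union, Set.mem_union, Finset.mem_coe, Finset.mem_Icc]
    split_ifs <;> omega
  · intro v _ w _ h
    have hv2 := v.2
    have hw2 := w.2
    apply Fin.ext
    simp only at h
    split_ifs at h <;> omega


lemma shortE_ne (n r : ℕ) : ∀ e ∈ shortE n r, e.1 ≠ e.2 := by
  intro e he
  exact ((Finset.mem_filter.1 he).2.1).ne

lemma shortE_asymm (n r : ℕ) : ∀ e ∈ shortE n r, (e.2, e.1) ∉ shortE n r := by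
  intro e he h
  exact lt_asymm (Finset.mem_filter.1 he).2.1 (Finset.mem_filter.1 h).2.1

lemma short_conc {n r : ℕ} (hn : 3 ≤ n) (hr : r < n) (t : ℝ) (ht : 1 ≤ t) :
    prob n (fun C => 2 * t ≤ |(shortCount n r C : ℝ) - r|) ≤ 10 * r / t^2 := by
  have hn' : (3:ℝ) ≤ n := by exact_mod_cast hn
  have hr' : (r:ℝ) < n := by exact_mod_cast hr
  have hr0 : (0:ℝ) ≤ r := by positivity
  have hc := chebyshev hn (shortE n r) (shortE_ne n r) (shortE_asymm n r) _ t rfl (by linarith)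
  set μ : ℝ := ((shortE n r).card : ℝ) / (2*n-1 : ℝ) with hμ
  have e1 : μ = r + r / (2*n-1) := by
    rw [hμ, card_shortE hr]
    push_cast
    have : (2*n-1 : ℝ) ≠ 0 := by linarith
    field_simp
    ring
  have h0 : 0 ≤ (r:ℝ) / (2*n-1) := div_nonneg hr0 (by linarith)
  have h1 : (r:ℝ) / (2*n-1) ≤ 1 := by
    rw [div_le_one (by linarith)]; linarith
  have h2 : (r:ℝ) / (2*n-1) ≤ r := div_le_self hr0 (by linarith)
  have h3 : 2 * μ^2 / n ≤ 8 * r := by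
    rw [div_le_iff₀ (by linarith)]
    have : μ ≤ 2 * r := by linarith
    have : 0 ≤ μ := by linarith
    nlinarith
  refine (prob_mono ?_).trans (hc.trans ?_)
  · intro C hC
    rw [shortCount_eq] at hC
    have : |(cnt (shortE n r) C : ℝ) - r| ≤ |(cnt (shortE n r) C : ℝ) - μ| + |μ - r| :=
      abs_sub_le _ _ _
    have h4 : |μ - r| ≤ 1 := by
      rw [abs_le]; constructor <;> linarith
    linarith
  · gcongr
    linarith

/-- Number of endpoints in the small arc of `x y` whose chord is at most as long. -/
noncomputable def lossCnt {n : ℕ} (x y : Fin (2*n)) (C : ChordDiagram n) : ℕ :=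
  ((arc x y).filter fun u => clen u (C.1 u) ≤ clen x y).card

/-- Potential loss edges. -/
noncomputable def lossE {n : ℕ} (x y : Fin (2*n)) : Finset (Fin (2*n) × Fin (2*n)) :=
  (arc x y ×ˢ univ).filter fun e => e.2 ≠ e.1 ∧ clen e.1 e.2 ≤ clen x y

lemma card_lossE {n : ℕ} (x y : Fin (2*n)) (h : x ≠ y) :
    (lossE x y).card ≤ clen x y * (2 * (clen x y + 1)) := by
  have : lossE x y ⊆ (arc x y).biUnion (fun u =>
      (univ.filter fun v : Fin (2*n) => v ≠ u ∧ clen u v ≤ clen x y).image (fun v => (u, v))) := by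
    rintro ⟨u, v⟩ he
    simp only [lossE, Finset.mem_filter, Finset.mem_product, mem_univ, and_true] at he
    simp only [Finset.mem_biUnion, Finset.mem_image, Finset.mem_filter, mem_univ, true_and]
    exact ⟨u, he.1, v, he.2, rfl⟩
  refine (Finset.card_le_card this).trans ?_
  refine (Finset.card_biUnion_le).trans ?_
  calc _ ≤ ∑ u ∈ arc x y, 2 * (clen x y + 1) := by
        apply Finset.sum_le_sum
        intro u _
        exact Finset.card_image_le.trans (card_near u _)
    _ = _ := by rw [Finset.sum_const, card_arc x y h, smul_eq_mul]

/-- Six distinct points. -/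
def Dist6 {n : ℕ} (x y u v a b : Fin (2*n)) : Prop :=
  x ≠ y ∧ x ≠ u ∧ y ≠ u ∧ x ≠ v ∧ y ≠ v ∧ u ≠ v ∧ a ≠ x ∧ a ≠ y ∧ a ≠ u ∧ a ≠ v ∧
    b ≠ x ∧ b ≠ y ∧ b ≠ u ∧ b ≠ v ∧ b ≠ a

/-- Pairs of potential loss edges in general position. -/
noncomputable def lossT {n : ℕ} (x y : Fin (2*n)) :
    Finset ((Fin (2*n) × Fin (2*n)) × (Fin (2*n) × Fin (2*n))) :=
  (lossE x y ×ˢ lossE x y).filter fun p => Dist6 x y p.1.1 p.1.2 p.2.1 p.2.2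

lemma loss_inj {n : ℕ} (x y : Fin (2*n)) (C : ChordDiagram n) (hC : C.1 x = y) :
    lossCnt x y C * (lossCnt x y C - 2) ≤
      ((lossT x y).filter fun p => (C.1 x = y ∧ C.1 p.1.1 = p.1.2) ∧ C.1 p.2.1 = p.2.2).card := by
  set B := (arc x y).filter fun u => clen u (C.1 u) ≤ clen x y with hB
  have h1 : lossCnt x y C * (lossCnt x y C - 2) ≤
      (B.sigma (fun u => B \ {u, C.1 u})).card := by
    rw [Finset.card_sigma]
    calc _ = ∑ u ∈ B, (B.card - 2) := by
          rw [Finset.sum_const, smul_eq_mul]; rfl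
      _ ≤ _ := by
          apply Finset.sum_le_sum
          intro u _
          have := Finset.le_card_sdiff {u, C.1 u} B
          have h2 : ({u, C.1 u} : Finset (Fin (2*n))).card ≤ 2 := Finset.card_le_two
          omega
  refine h1.trans ?_
  apply Finset.card_le_card_of_injOn
    (fun p => ((p.1, C.1 p.1), (p.2, C.1 p.2)))
  · rintro ⟨u, a⟩ hp
    simp only [Finset.coe_sigma, Set.mem_sigma_iff, Finset.mem_coe, Finset.mem_sdiff,
      Finset.mem_insert, Finset.mem_singleton, not_or] at hp
    obtain ⟨hu, ha, hau, haC⟩ := hp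
    rw [hB, Finset.mem_filter] at hu ha
    have hua := (mem_arc x y u).1 hu.1
    have haa := (mem_arc x y a).1 ha.1
    have ux : u ≠ x := fun h => hua.1 (congrArg Fin.val h)
    have uy : u ≠ y := fun h => hua.2.1 (congrArg Fin.val h)
    have ax : a ≠ x := fun h => haa.1 (congrArg Fin.val h)
    have ay : a ≠ y := fun h => haa.2.1 (congrArg Fin.val h)
    have inj : ∀ s t, C.1 s = C.1 t → s = t := fun s t h => by rw [← invol C s, h, invol]
    have hy : C.1 y = x := by rw [← hC, invol]
    rw [Finset.mem_coe, Finset.mem_filter]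
    refine ⟨?_, ⟨hC, rfl⟩, rfl⟩
    rw [lossT, Finset.mem_filter, Finset.mem_product, lossE, Finset.mem_filter, Finset.mem_filter,
      Finset.mem_product, Finset.mem_product]
    refine ⟨⟨⟨⟨hu.1, mem_univ _⟩, nofix C u, hu.2⟩, ⟨⟨ha.1, mem_univ _⟩, nofix C a, ha.2⟩⟩, ?_⟩
    refine ⟨?_, ux.symm, uy.symm, ?_, ?_, (nofix C u).symm, ax, ay, hau, haC, ?_, ?_, ?_, ?_,
      nofix C a⟩
    · rw [← hC]; exact (nofix C x).symm
    · intro h; apply uy; apply inj; rw [hy]; exact h.symm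
    · intro h; apply ux; apply inj; rw [hC]; exact h.symm
    · intro h; apply ay; apply inj; rw [hy]; exact h
    · intro h; apply ax; apply inj; rw [hC]; exact h
    · intro h; apply haC; apply inj; rw [invol]; exact h
    · intro h; exact hau (inj _ _ h)
  · rintro ⟨u, a⟩ _ ⟨u', a'⟩ _ h
    simp only [Prod.mk.injEq] at h
    obtain ⟨⟨rfl, _⟩, rfl, _⟩ := h
    rfl

lemma loss_pair {n : ℕ} (hn : 5 ≤ n) (x y : Fin (2*n)) (hxy : x ≠ y) (δ : ℝ)
    (hδ0 : 0 < δ) (hδ : 4 ≤ δ * clen x y) :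
    prob n (fun C => C.1 x = y ∧ δ * clen x y ≤ lossCnt x y C) ≤
      32 * (clen x y : ℝ)^2 / (δ^2 * (n:ℝ)^3) := by
  have hn' : (5:ℝ) ≤ n := by exact_mod_cast hn
  set l := clen x y with hl
  have hl1 : 1 ≤ l := by
    by_contra h
    have : l = 0 := by omega
    rw [this] at hδ; norm_num at hδ
  have hl1' : (1:ℝ) ≤ l := by exact_mod_cast hl1
  have ha : 0 < (δ * l)^2 / 2 := by positivity
  have hm := markov (n := n) (fun C => C.1 x = y ∧ δ * l ≤ lossCnt x y C)
    (fun C => ∑ p ∈ lossT x y,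
      if (C.1 x = y ∧ C.1 p.1.1 = p.1.2) ∧ C.1 p.2.1 = p.2.2 then (1:ℝ) else 0)
    ((δ * l)^2 / 2) ha (fun C => Finset.sum_nonneg fun p _ => by positivity) (by
      rintro C ⟨hC, hY⟩
      rw [Finset.sum_boole]
      have h := loss_inj x y C hC
      set Y := lossCnt x y C
      have hY2 : 2 ≤ Y := by
        have : (4:ℝ) ≤ Y := by linarith
        have : 4 ≤ Y := by exact_mod_cast this
        omega
      have h' : ((Y * (Y - 2) : ℕ) : ℝ) ≤ _ := Nat.cast_le.2 h
      rw [Nat.cast_mul, Nat.cast_sub hY2] at h'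
      refine le_trans ?_ h'
      push_cast
      nlinarith)
  refine hm.trans ?_
  have hex : ex n (fun C => ∑ p ∈ lossT x y,
      if (C.1 x = y ∧ C.1 p.1.1 = p.1.2) ∧ C.1 p.2.1 = p.2.2 then (1:ℝ) else 0) ≤
      16 * (l:ℝ)^4 / (n:ℝ)^3 := by
    rw [ex_sum]
    calc _ ≤ ∑ p ∈ lossT x y, 1 / (n:ℝ)^3 := by
          apply Finset.sum_le_sum
          intro p hp
          have hp' := (Finset.mem_filter.1 hp).2
          obtain ⟨h1, h2, h3, h4, h5, h6, h7, h8, h9, h10, h11, h12, h13, h14, h15⟩ := hp'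
          have h := prob_three x y p.1.1 p.1.2 p.2.1 p.2.2 h1 h2 h3 h4 h5 h6 h7 h8 h9 h10 h11
            h12 h13 h14 h15
          rw [prob_eq_ex] at h
          rw [h]
          apply one_div_le_one_div_of_le (by positivity)
          have a1 : (n:ℝ) ≤ 2*n-1 := by linarith
          have a2 : (n:ℝ) ≤ 2*n-3 := by linarith
          have a3 : (n:ℝ) ≤ 2*n-5 := by linarith
          calc (n:ℝ)^3 = n * n * n := by ring
            _ ≤ _ := by
              gcongr
              all_goals first | linarith | (apply mul_nonneg <;> linarith)
      _ = (lossT x y).card * (1 / (n:ℝ)^3) := by rw [Finset.sum_const, nsmul_eq_mul]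
      _ ≤ (16 * (l:ℝ)^4) * (1 / (n:ℝ)^3) := by
          gcongr
          have c1 : (lossT x y).card ≤ (l * (2 * (l + 1))) * (l * (2 * (l+1))) := by
            refine (Finset.card_filter_le _ _).trans ?_
            rw [Finset.card_product]
            exact Nat.mul_le_mul (card_lossE x y hxy) (card_lossE x y hxy)
          have c2 : (l * (2 * (l + 1))) * (l * (2 * (l+1))) ≤ 16 * l^4 := by
            have : l * (2 * (l + 1)) ≤ 4 * l^2 := by nlinarith
            calc _ ≤ (4 * l^2) * (4 * l^2) := Nat.mul_le_mul this this
              _ = _ := by ring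
          exact_mod_cast c1.trans c2
      _ = _ := by ring
  calc _ ≤ (16 * (l:ℝ)^4 / (n:ℝ)^3) / ((δ * l)^2 / 2) := by gcongr
    _ = _ := by field_simp; ring

lemma mid_bound {n : ℕ} (hn : 5 ≤ n) (lo L : ℕ) (hL : 1 ≤ L) (δ : ℝ)
    (hδ0 : 0 < δ) (hδ : 4 ≤ δ * lo) :
    prob n (fun C => ∃ x, lo ≤ chordLength C x ∧ chordLength C x ≤ L ∧
      δ * chordLength C x ≤ lossCnt x (C.1 x) C) ≤ 256 * (L:ℝ)^3 / (δ^2 * (n:ℝ)^2) := by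
  have hn' : (5:ℝ) ≤ n := by exact_mod_cast hn
  set W : Finset (Fin (2*n) × Fin (2*n)) :=
    univ.filter fun e => (e.2 ≠ e.1 ∧ clen e.1 e.2 ≤ L) ∧ lo ≤ clen e.1 e.2 with hW
  have hWc : W.card ≤ 2 * n * (2 * (L + 1)) := by
    have : W ⊆ (univ : Finset (Fin (2*n))).biUnion (fun u =>
      (univ.filter fun v : Fin (2*n) => v ≠ u ∧ clen u v ≤ L).image (fun v => (u, v))) := by
      rintro ⟨u, v⟩ he
      simp only [hW, Finset.mem_filter, mem_univ, true_and] at he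
      simp only [Finset.mem_biUnion, Finset.mem_image, Finset.mem_filter, mem_univ, true_and]
      exact ⟨u, v, he.1, rfl⟩
    refine (Finset.card_le_card this).trans ?_
    refine (Finset.card_biUnion_le).trans ?_
    calc _ ≤ ∑ u ∈ (univ : Finset (Fin (2*n))), 2 * (L + 1) := by
          apply Finset.sum_le_sum
          intro u _
          exact Finset.card_image_le.trans (card_near u _)
      _ = _ := by simp
  have h1 : prob n (fun C => ∃ x, lo ≤ chordLength C x ∧ chordLength C x ≤ L ∧
      δ * chordLength C x ≤ lossCnt x (C.1 x) C) ≤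
      prob n (fun C => ∃ e ∈ W, C.1 e.1 = e.2 ∧ δ * clen e.1 e.2 ≤ lossCnt e.1 e.2 C) := by
    apply prob_mono
    rintro C ⟨x, hx1, hx2, hx3⟩
    refine ⟨(x, C.1 x), ?_, rfl, hx3⟩
    rw [hW, Finset.mem_filter]
    exact ⟨mem_univ _, ⟨nofix C x, hx2⟩, hx1⟩
  refine h1.trans ((prob_exists_le W _).trans ?_)
  calc _ ≤ ∑ e ∈ W, 32 * (L:ℝ)^2 / (δ^2 * (n:ℝ)^3) := by
        apply Finset.sum_le_sum
        intro e he
        rw [hW, Finset.mem_filter] at he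
        obtain ⟨_, ⟨he1, he2⟩, he3⟩ := he
        have he2' : (clen e.1 e.2 : ℝ) ≤ L := by exact_mod_cast he2
        have he3' : (lo : ℝ) ≤ clen e.1 e.2 := by exact_mod_cast he3
        refine (loss_pair hn e.1 e.2 he1.symm δ hδ0 (by nlinarith)).trans ?_
        gcongr
    _ = W.card * (32 * (L:ℝ)^2 / (δ^2 * (n:ℝ)^3)) := by rw [Finset.sum_const, nsmul_eq_mul]
    _ ≤ (8 * n * L) * (32 * (L:ℝ)^2 / (δ^2 * (n:ℝ)^3)) := by
        gcongr
        have : W.card ≤ 8 * n * L := by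
          refine hWc.trans ?_
          nlinarith
        exact_mod_cast this
    _ = _ := by field_simp; ring


/-- The `i`-th aligned block of size `b`. -/
noncomputable def blk (n b i : ℕ) : Finset (Fin (2*n)) :=
  univ.filter fun u => i * b ≤ (u:ℕ) ∧ (u:ℕ) < (i+1) * b

lemma mem_blk {n b i : ℕ} (u : Fin (2*n)) :
    u ∈ blk n b i ↔ i * b ≤ (u:ℕ) ∧ (u:ℕ) < (i+1) * b := by
  simp only [blk, Finset.mem_filter, mem_univ, true_and]

lemma card_blk {n b i : ℕ} (h : (i+1) * b ≤ 2 * n) : (blk n b i).card = b := by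
  have : (Finset.Ico (i * b) ((i+1) * b)).card = b := by
    rw [Nat.card_Ico, add_mul, one_mul]; omega
  refine Eq.trans ?_ this
  apply Finset.card_bij (fun (u : Fin (2*n)) _ => (u:ℕ))
  · intro u hu; rw [mem_blk] at hu; simpa using hu
  · intro u _ v _ h; exact Fin.ext h
  · intro c hc
    simp only [Finset.mem_Ico] at hc
    exact ⟨⟨c, by omega⟩, by rw [mem_blk]; exact hc, rfl⟩

lemma block_one {n b q i j : ℕ} (hn : 3 ≤ n) (hi : (i+1) * b ≤ 2 * n) (hj : (j+1) * q ≤ 2 * n)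
    (hd : Disjoint (blk n b i) (blk n q j)) (hb : 1 ≤ b) (hbn : b ≤ n) (hq : (n:ℝ) / 8 ≤ q) :
    prob n (fun C => (cnt (blk n b i ×ˢ blk n q j) C : ℝ) < b / 32) ≤ 72 / b := by
  have hn' : (3:ℝ) ≤ n := by exact_mod_cast hn
  have hb' : (1:ℝ) ≤ b := by exact_mod_cast hb
  have hbn' : (b:ℝ) ≤ n := by exact_mod_cast hbn
  have hdd := Finset.disjoint_left.1 hd
  set E := blk n b i ×ˢ blk n q j with hE
  have hEc : (E.card : ℝ) = b * q := by
    rw [hE, Finset.card_product, card_blk hi, card_blk hj]; push_cast; ring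
  set μ : ℝ := (E.card : ℝ) / (2*n-1 : ℝ) with hμ
  have hμb : (b:ℝ) / 16 ≤ μ := by
    rw [hμ, hEc, le_div_iff₀ (by linarith)]
    nlinarith
  have hμ0 : 0 < μ := by linarith
  have hc := chebyshev hn E (by
      rintro ⟨u, v⟩ he h
      rw [hE, Finset.mem_product] at he
      simp only at h he
      subst h
      exact hdd he.1 he.2) (by
      rintro ⟨u, v⟩ he h
      rw [hE, Finset.mem_product] at he h
      exact hdd he.1 h.2) μ (μ/2) hμ (by linarith)
  refine (prob_mono ?_).trans (hc.trans ?_)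
  · intro C hC
    rw [abs_sub_comm]
    refine le_trans ?_ (le_abs_self _)
    linarith
  · have e1 : (μ + 2 * μ^2 / n) / (μ/2)^2 = 4 / μ + 8 / n := by
      field_simp; ring
    rw [e1]
    have h1 : 4 / μ ≤ 64 / b := by
      rw [div_le_div_iff₀ hμ0 (by linarith)]; linarith
    have h2 : (8:ℝ) / n ≤ 8 / b := by gcongr
    have h3 : (64:ℝ) / b + 8 / b = 72 / b := by ring
    linarith

lemma block_bound {n b : ℕ} (hn : 8 ≤ n) (hb : 1 ≤ b) (hbn : b ≤ n) :
    prob n (fun C => ∃ i j, i < 2 * n / b ∧ j < 2 * n / (n/4) ∧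
      Disjoint (blk n b i) (blk n (n/4) j) ∧
      (cnt (blk n b i ×ˢ blk n (n/4) j) C : ℝ) < b / 32) ≤ 2304 * n / (b:ℝ)^2 := by
  have hn' : (8:ℝ) ≤ n := by exact_mod_cast hn
  have hb' : (1:ℝ) ≤ b := by exact_mod_cast hb
  have hq : (n:ℝ) / 8 ≤ ((n/4 : ℕ) : ℝ) := by
    rw [div_le_iff₀ (by norm_num)]
    have : n ≤ (n/4) * 8 := by omega
    exact_mod_cast this
  set W := range (2 * n / b) ×ˢ range (2 * n / (n/4)) with hW
  have h1 := prob_exists_le (n := n) W (fun p C => Disjoint (blk n b p.1) (blk n (n/4) p.2) ∧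
      (cnt (blk n b p.1 ×ˢ blk n (n/4) p.2) C : ℝ) < b / 32)
  refine (prob_mono ?_).trans (h1.trans ?_)
  · rintro C ⟨i, j, hi, hj, h⟩
    exact ⟨(i, j), by simp [hW, hi, hj], h⟩
  · calc _ ≤ ∑ p ∈ W, 72 / (b:ℝ) := by
          apply Finset.sum_le_sum
          rintro ⟨i, j⟩ hp
          simp only [hW, Finset.mem_product, Finset.mem_range] at hp
          by_cases hd : Disjoint (blk n b i) (blk n (n/4) j)
          · have hi : (i+1) * b ≤ 2 * n := by
              have := Nat.div_mul_le_self (2*n) b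
              have := Nat.mul_le_mul_right b (Nat.succ_le_of_lt hp.1)
              simp only [Nat.succ_eq_add_one] at this
              omega
            have hj : (j+1) * (n/4) ≤ 2 * n := by
              have := Nat.div_mul_le_self (2*n) (n/4)
              have := Nat.mul_le_mul_right (n/4) (Nat.succ_le_of_lt hp.2)
              simp only [Nat.succ_eq_add_one] at this
              omega
            refine le_trans (prob_mono ?_) (block_one (by omega) hi hj hd hb hbn hq)
            rintro C ⟨_, h⟩
            exact h
          · refine le_trans (prob_mono (F := fun _ => False) ?_) ?_
            · rintro C ⟨h, _⟩; exact hd h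
            · unfold prob; simp; positivity
      _ = W.card * (72 / (b:ℝ)) := by rw [Finset.sum_const, nsmul_eq_mul]
      _ ≤ (2 * n / b * 16) * (72 / (b:ℝ)) := by
          gcongr
          rw [hW, Finset.card_product, Finset.card_range, Finset.card_range]
          push_cast
          have a1 : ((2 * n / b : ℕ) : ℝ) ≤ 2 * n / b := by
            refine Nat.cast_div_le.trans ?_
            push_cast; exact le_refl _
          have a2 : ((2 * n / (n/4) : ℕ) : ℝ) ≤ 16 := by
            have : 2 * n / (n/4) ≤ 16 := by
              apply Nat.div_le_of_le_mul
              omega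
            exact_mod_cast this
          gcongr
      _ = _ := by field_simp; ring

lemma aligned {b s e : ℕ} (hb : 1 ≤ b) (h : s + 2 * b ≤ e) :
    ∃ i, s ≤ i * b ∧ (i + 1) * b ≤ e := by
  refine ⟨s / b + 1, ?_, ?_⟩
  · have := Nat.div_add_mod s b
    have := Nat.mod_lt s hb
    rw [add_mul, mul_comm (s / b)]; omega
  · have := Nat.div_mul_le_self s b
    rw [add_mul, add_mul]; omega

lemma lt_div_of {b i N : ℕ} (hb : 1 ≤ b) (h : (i + 1) * b ≤ N) : i < N / b := by
  rw [← Nat.succ_le_iff, Nat.le_div_iff_mul_le hb]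
  exact h

/-- Long chords separate two aligned blocks. -/
lemma long_geom {n b : ℕ} (hn : 8 ≤ n) (hb : 1 ≤ b) (C : ChordDiagram n) (x : Fin (2*n))
    (hx : 4 * b ≤ chordLength C x) :
    ∃ i j, i < 2 * n / b ∧ j < 2 * n / (n/4) ∧ Disjoint (blk n b i) (blk n (n/4) j) ∧
      ∀ u ∈ blk n b i, C.1 u ∈ blk n (n/4) j → Crosses C x u := by
  have hq : 1 ≤ n / 4 := by omega
  rw [chordLength_eq] at hx
  unfold clen at hx
  have hx2 := x.2
  have hy2 := (C.1 x).2
  -- it suffices to find intervals on the two sides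
  have main : ∀ s e s' e' : ℕ, s + 2 * b ≤ e → e ≤ 2 * n → s' + 2 * (n/4) ≤ e' → e' ≤ 2 * n →
      (((∀ z : ℕ, s ≤ z → z < e → min (x:ℕ) (C.1 x) < z ∧ z < max (x:ℕ) (C.1 x)) ∧
        (∀ z : ℕ, s' ≤ z → z < e' → ¬ (min (x:ℕ) (C.1 x) < z ∧ z < max (x:ℕ) (C.1 x)))) ∨
      ((∀ z : ℕ, s ≤ z → z < e → ¬ (min (x:ℕ) (C.1 x) < z ∧ z < max (x:ℕ) (C.1 x))) ∧
        (∀ z : ℕ, s' ≤ z → z < e' → (min (x:ℕ) (C.1 x) < z ∧ z < max (x:ℕ) (C.1 x))))) →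
      ∃ i j, i < 2 * n / b ∧ j < 2 * n / (n/4) ∧ Disjoint (blk n b i) (blk n (n/4) j) ∧
        ∀ u ∈ blk n b i, C.1 u ∈ blk n (n/4) j → Crosses C x u := by
    intro s e s' e' h1 h2 h3 h4 h
    obtain ⟨i, hi1, hi2⟩ := aligned hb h1
    obtain ⟨j, hj1, hj2⟩ := aligned hq h3
    refine ⟨i, j, lt_div_of hb (hi2.trans h2), lt_div_of hq (hj2.trans h4), ?_, ?_⟩
    · rw [Finset.disjoint_left]
      intro u hu hu'
      rw [mem_blk] at hu hu'
      rcases h with ⟨ha, hc⟩ | ⟨ha, hc⟩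
      · exact hc u (hj1.trans hu'.1) (hu'.2.trans_le hj2) (ha u (hi1.trans hu.1) (hu.2.trans_le hi2))
      · exact ha u (hi1.trans hu.1) (hu.2.trans_le hi2) (hc u (hj1.trans hu'.1) (hu'.2.trans_le hj2))
    · intro u hu hu'
      rw [mem_blk] at hu hu'
      rw [crosses_def, between_iff, between_iff]
      rcases h with ⟨ha, hc⟩ | ⟨ha, hc⟩
      · left
        exact ⟨ha u (hi1.trans hu.1) (hu.2.trans_le hi2),
          hc _ (hj1.trans hu'.1) (hu'.2.trans_le hj2)⟩
      · right
        exact ⟨hc _ (hj1.trans hu'.1) (hu'.2.trans_le hj2),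
          ha u (hi1.trans hu.1) (hu.2.trans_le hi2)⟩
  generalize hlo : min (x:ℕ) (C.1 x) = lo at *
  generalize hhi : max (x:ℕ) (C.1 x) = hi at *
  have hlh : lo ≤ hi := by omega
  have hh : hi < 2 * n := by omega
  by_cases hd : hi - lo ≤ n
  · by_cases hs : 2 * (n/4) ≤ lo
    · exact main (lo+1) hi 0 lo (by omega) (by omega) (by omega) (by omega)
        (Or.inl ⟨fun z _ _ => by omega, fun z _ _ => by omega⟩)
    · exact main (lo+1) hi (hi+1) (2*n) (by omega) (by omega) (by omega) (by omega)
        (Or.inl ⟨fun z _ _ => by omega, fun z _ _ => by omega⟩)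
  · by_cases hs : 2 * b ≤ lo
    · exact main 0 lo (lo+1) hi (by omega) (by omega) (by omega) (by omega)
        (Or.inr ⟨fun z _ _ => by omega, fun z _ _ => by omega⟩)
    · exact main (hi+1) (2*n) (lo+1) hi (by omega) (by omega) (by omega) (by omega)
        (Or.inr ⟨fun z _ _ => by omega, fun z _ _ => by omega⟩)

lemma core_of_good {n b k r : ℕ} (hn : 8 ≤ n) (hb : 1 ≤ b) (δ : ℝ) (hδ1 : δ ≤ 1)
    (hr : (k:ℝ) ≤ (1 - δ) * r)
    (C : ChordDiagram n)
    (hmid : ¬ ∃ x, r ≤ chordLength C x ∧ chordLength C x ≤ 4 * b ∧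
      δ * chordLength C x ≤ lossCnt x (C.1 x) C)
    (hblk : ¬ ∃ i j, i < 2 * n / b ∧ j < 2 * n / (n/4) ∧
      Disjoint (blk n b i) (blk n (n/4) j) ∧
      (cnt (blk n b i ×ˢ blk n (n/4) j) C : ℝ) < b / 32)
    (hZ : 2 * (shortCount n r C : ℝ) + k ≤ b / 32) :
    IsCore C k (lenAtLeast n r C) := by
  have hmem : ∀ u, u ∈ lenAtLeast n r C ↔ r ≤ chordLength C u := by
    intro u
    simp only [lenAtLeast, Finset.mem_filter, mem_univ, true_and]
  have hclosed : ∀ u ∈ lenAtLeast n r C, C.1 u ∈ lenAtLeast n r C := by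
    intro u hu
    rw [hmem] at hu ⊢
    rwa [chordLength_C]
  refine ⟨hclosed, fun x hx => ?_⟩
  rw [hmem] at hx
  by_cases hl : chordLength C x ≤ 4 * b
  · have hY : (lossCnt x (C.1 x) C : ℝ) < δ * chordLength C x := by
      by_contra h
      exact hmid ⟨x, hx, hl, not_lt.1 h⟩
    have hge := degreeIn_ge C (lenAtLeast n r C)
      ((arc x (C.1 x)).filter fun u => ¬ clen u (C.1 u) ≤ clen x (C.1 x)) x hclosed
      (by
        intro u hu
        rw [Finset.mem_filter] at hu
        rw [hmem, chordLength_eq]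
        rw [chordLength_eq] at hx
        omega)
      (by
        intro u hu hu'
        rw [Finset.mem_filter] at hu hu'
        have := clen_lt_of_mem_arc x (C.1 x) u (C.1 u) hu.1 hu'.1
        omega)
      (by
        intro u hu
        rw [Finset.mem_filter] at hu
        have hm := (mem_arc _ _ _).1 hu.1
        rw [crosses_iff C x u (fun h => hm.1 (congrArg Fin.val h))
          (fun h => hm.2.1 (congrArg Fin.val h))]
        left
        refine ⟨hu.1, fun h => ?_⟩
        have := clen_lt_of_mem_arc x (C.1 x) u (C.1 u) hu.1 h
        omega)
    have hsum := Finset.card_filter_add_card_filter_not (s := arc x (C.1 x))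
      (fun u => clen u (C.1 u) ≤ clen x (C.1 x))
    rw [card_arc x (C.1 x) (nofix C x).symm, ← chordLength_eq] at hsum
    refine le_trans ?_ hge
    have hsum' : (lossCnt x (C.1 x) C : ℝ) +
      (((arc x (C.1 x)).filter fun u => ¬ clen u (C.1 u) ≤ clen x (C.1 x)).card : ℝ) =
        chordLength C x := by
      rw [← hsum]; push_cast; rfl
    have hx' : (r:ℝ) ≤ chordLength C x := by exact_mod_cast hx
    have : (k:ℝ) ≤
      (((arc x (C.1 x)).filter fun u => ¬ clen u (C.1 u) ≤ clen x (C.1 x)).card : ℝ) := by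
      nlinarith
    exact_mod_cast this
  · obtain ⟨i, j, hi, hj, hd, hX⟩ := long_geom hn hb C x (by omega)
    have hcnt : (b:ℝ) / 32 ≤ (cnt (blk n b i ×ˢ blk n (n/4) j) C : ℝ) := by
      by_contra h
      exact hblk ⟨i, j, hi, hj, hd, not_le.1 h⟩
    have hdd := Finset.disjoint_left.1 hd
    set T := (blk n b i).filter fun u => C.1 u ∈ blk n (n/4) j ∧ r ≤ chordLength C u with hT
    have hge := degreeIn_ge C (lenAtLeast n r C) T x hclosed
      (by
        intro u hu
        rw [hT, Finset.mem_filter] at hu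
        rw [hmem]; exact hu.2.2)
      (by
        intro u hu hu'
        rw [hT, Finset.mem_filter] at hu hu'
        exact hdd hu'.1 hu.2.1)
      (by
        intro u hu
        rw [hT, Finset.mem_filter] at hu
        exact hX u hu.1 hu.2.1)
    refine le_trans ?_ hge
    set Sh := univ.filter fun u : Fin (2*n) => chordLength C u < r with hSh
    have hShc : Sh.card = 2 * shortCount n r C := by
      rw [card_half C Sh]
      · congr 1
        unfold shortCount
        congr 1
        ext u
        simp only [hSh, Finset.mem_filter, mem_univ, true_and]
        tauto
      · intro u hu
        simp only [hSh, Finset.mem_filter, mem_univ, true_and] at hu ⊢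
        rwa [chordLength_C]
    have hle : cnt (blk n b i ×ˢ blk n (n/4) j) C ≤ T.card + Sh.card := by
      refine le_trans ?_ (Finset.card_union_le _ _)
      unfold cnt
      apply Finset.card_le_card_of_injOn (fun e => e.1)
      · rintro ⟨u, v⟩ he
        rw [Finset.mem_coe, Finset.mem_filter, Finset.mem_product] at he
        obtain ⟨⟨h1, h2⟩, h3⟩ := he
        simp only at h1 h2 h3
        subst h3
        rw [Finset.mem_coe, Finset.mem_union]
        by_cases h : r ≤ chordLength C u
        · left; rw [hT, Finset.mem_filter]; exact ⟨h1, h2, h⟩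
        · right; rw [hSh, Finset.mem_filter]; exact ⟨mem_univ _, not_le.1 h⟩
      · rintro ⟨u, v⟩ he ⟨u', v'⟩ he' h
        rw [Finset.mem_coe, Finset.mem_filter] at he he'
        have h3 := he.2
        have h4 := he'.2
        simp only at h h3 h4
        subst h
        rw [← h3, ← h4]
    have hle' : (cnt (blk n b i ×ˢ blk n (n/4) j) C : ℝ) ≤ T.card + 2 * shortCount n r C := by
      rw [hShc] at hle
      exact_mod_cast hle
    have : (k:ℝ) ≤ T.card := by linarith
    exact_mod_cast this


lemma final_bound {n b k : ℕ} (ε : ℝ) (hε : 0 < ε) (hn : 8 ≤ n) (hb : 1 ≤ b) (hbn : b ≤ n)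
    (hk : 8 ≤ ε * k) (hkb : (3 + 2 * ε) * k ≤ b / 32) :
    prob n (fun C => ε < |((n : ℝ) - (kCoreSize n k C : ℝ)) / (k : ℝ) - 1|) ≤
      (40 / ε^2 + 640 * (2 + ε) / ε^2) / k
      + 256 * 64 / (ε / (2 + ε))^2 * ((b:ℝ)^3 / (n:ℝ)^2) + 2304 * ((n:ℝ) / (b:ℝ)^2) := by
  have hbn' : (b:ℝ) ≤ n := by exact_mod_cast hbn
  have hb' : (1:ℝ) ≤ b := by exact_mod_cast hb
  have hk1 : 1 ≤ k := by
    by_contra h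
    have : k = 0 := by omega
    rw [this] at hk; norm_num at hk
  have hk1' : (1:ℝ) ≤ k := by exact_mod_cast hk1
  set r := ⌈(1 + ε/2) * k⌉₊ with hr
  have hr1 : (1 + ε/2) * k ≤ r := Nat.le_ceil _
  have hr2 : (r:ℝ) < (1 + ε/2) * k + 1 := Nat.ceil_lt_add_one (by positivity)
  have hr3 : (r:ℝ) ≤ (2 + ε) * k := by nlinarith
  have hrn : r < n := by
    have : (r:ℝ) < n := by nlinarith
    exact_mod_cast this
  have hkn : k < n := by
    have : (k:ℝ) < n := by nlinarith
    exact_mod_cast this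
  set δ := ε / (2 + ε) with hδ
  have hδ0 : 0 < δ := by positivity
  have hδ1 : δ ≤ 1 := by rw [hδ, div_le_one (by linarith)]; linarith
  have h1δ : 1 - δ = 2 / (2 + ε) := by rw [hδ]; field_simp; ring
  have hkr : (k:ℝ) ≤ (1 - δ) * r := by
    rw [h1δ, div_mul_eq_mul_div, le_div_iff₀ (by linarith)]
    nlinarith
  have hδr : 4 ≤ δ * r := by
    rw [hδ, div_mul_eq_mul_div, le_div_iff₀ (by linarith)]
    nlinarith
  have p1 := short_conc (n := n) (r := k) (by omega) hkn (ε * k / 2) (by linarith)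
  have p2 := short_conc (n := n) (r := r) (by omega) hrn (ε * k / 8) (by linarith)
  have p3 := mid_bound (n := n) (by omega) r (4 * b) (by omega) δ hδ0 hδr
  have p4 := block_bound (n := n) hn hb hbn
  refine (prob_mono (F := fun C => ((2 * (ε * k / 2) ≤ |(shortCount n k C : ℝ) - k| ∨
    2 * (ε * k / 8) ≤ |(shortCount n r C : ℝ) - r|) ∨
    (∃ x, r ≤ chordLength C x ∧ chordLength C x ≤ 4 * b ∧
      δ * chordLength C x ≤ lossCnt x (C.1 x) C)) ∨ (∃ i j, i < 2 * n / b ∧ j < 2 * n / (n/4) ∧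
      Disjoint (blk n b i) (blk n (n/4) j) ∧
      (cnt (blk n b i ×ˢ blk n (n/4) j) C : ℝ) < b / 32)) ?_).trans ?_
  · intro C hC
    by_contra hcon
    rw [not_or, not_or, not_or] at hcon
    obtain ⟨⟨⟨h1, h2⟩, h3⟩, h4⟩ := hcon
    rw [not_le, abs_lt] at h1 h2
    have hZ : (shortCount n r C : ℝ) ≤ (1 + ε) * k := by linarith [h2.2]
    have hcore := core_of_good hn hb δ hδ1 hkr C h3 h4 (by nlinarith)
    have u1 : (n:ℝ) ≤ kCoreSize n k C + shortCount n r C := by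
      exact_mod_cast le_kCoreSize_add k r C hcore
    have u2 : (kCoreSize n k C : ℝ) + shortCount n k C ≤ n := by
      exact_mod_cast kCoreSize_add_le k C
    apply not_le.2 hC
    have hk0 : (0:ℝ) < k := by linarith
    rw [abs_le]
    constructor
    · rw [neg_le_sub_iff_le_add, ← sub_le_iff_le_add, le_div_iff₀ hk0]
      linarith [h1.1]
    · rw [sub_le_iff_le_add, div_le_iff₀ hk0]
      linarith
  · refine (prob_or_le _ _).trans ?_
    refine (add_le_add ((prob_or_le _ _).trans (add_le_add ((prob_or_le _ _).trans
      (add_le_add p1 p2)) p3)) p4).trans ?_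
    have e1 : 10 * (k:ℝ) / (ε * k / 2)^2 = 40 / ε^2 / k := by
      field_simp; norm_num
    have e2 : 10 * (r:ℝ) / (ε * k / 8)^2 ≤ 640 * (2 + ε) / ε^2 / k := by
      calc 10 * (r:ℝ) / (ε * k / 8)^2 ≤ 10 * ((2 + ε) * k) / (ε * k / 8)^2 := by gcongr
        _ = _ := by field_simp; norm_num
    have e3 : 256 * ((4 * b : ℕ):ℝ)^3 / (δ^2 * (n:ℝ)^2) =
        256 * 64 / δ^2 * ((b:ℝ)^3 / (n:ℝ)^2) := by
      push_cast; field_simp; ring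
    have e4 : 2304 * (n:ℝ) / (b:ℝ)^2 = 2304 * ((n:ℝ) / (b:ℝ)^2) := by ring
    rw [e1, e3, e4, add_div]
    linarith

lemma main (k : ℕ → ℕ) (hk1 : Filter.Tendsto k Filter.atTop Filter.atTop)
    (hk2 : Filter.Tendsto (fun n : ℕ => ((k n : ℝ))^2 / (n : ℝ)) Filter.atTop (nhds 0))
    (ε : ℝ) (hε : 0 < ε) :
    Filter.Tendsto
        (fun n : ℕ => prob n (fun C =>
          ε < |((n : ℝ) - (kCoreSize n (k n) C : ℝ)) / (k n : ℝ) - 1|))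
        Filter.atTop (nhds 0) := by
  have hkR : Tendsto (fun n => (k n : ℝ)) atTop atTop := tendsto_natCast_atTop_atTop.comp hk1
  have hpow : Tendsto (fun n : ℕ => (n:ℝ)^(1/10 : ℝ)) atTop atTop :=
    (tendsto_rpow_atTop (by norm_num)).comp tendsto_natCast_atTop_atTop
  have hneg : Tendsto (fun n : ℕ => (n:ℝ)^(-(1/5) : ℝ)) atTop (nhds 0) :=
    (tendsto_rpow_neg_atTop (by norm_num)).comp tendsto_natCast_atTop_atTop
  set c1 : ℝ := 40 / ε^2 + 640 * (2 + ε) / ε^2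
  set c2 : ℝ := 256 * 64 / (ε / (2 + ε))^2
  have hc2 : 0 ≤ c2 := by positivity
  have hlim : Tendsto (fun n : ℕ => c1 / k n + c2 * (n:ℝ)^(-(1/5) : ℝ) +
      2304 * (4 * (n:ℝ)^(-(1/5) : ℝ))) atTop (nhds 0) := by
    have := ((hkR.const_div_atTop c1).add (hneg.const_mul c2)).add
      ((hneg.const_mul 4).const_mul 2304)
    simpa using this
  refine squeeze_zero' (Eventually.of_forall fun n => prob_nonneg n _) ?_ hlim
  filter_upwards [hkR.eventually_ge_atTop (8 / ε), hpow.eventually_ge_atTop (64 * (3 + 2 * ε)),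
    hk2.eventually (gt_mem_nhds (zero_lt_one' ℝ)), eventually_ge_atTop 8] with n h1 h2 h3 h4
  have hn : (8:ℝ) ≤ n := by exact_mod_cast h4
  have hn0 : (0:ℝ) < n := by linarith
  set b := ⌊(n:ℝ)^(3/5 : ℝ)⌋₊ with hb
  set s := (n:ℝ)^(1/10 : ℝ) with hs
  have hs0 : 0 < s := by positivity
  have hs1 : 64 ≤ s := by nlinarith
  have en : (n:ℝ) = s^10 := by
    rw [hs, ← Real.rpow_natCast, ← Real.rpow_mul hn0.le]; norm_num
  have e35 : (n:ℝ)^(3/5 : ℝ) = s^6 := by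
    rw [hs, ← Real.rpow_natCast, ← Real.rpow_mul hn0.le]; norm_num
  have e15 : (n:ℝ)^(-(1/5) : ℝ) = 1 / s^2 := by
    rw [Real.rpow_neg hn0.le, hs, ← Real.rpow_natCast, ← Real.rpow_mul hn0.le]; norm_num
  rw [e35] at hb
  have hs6 : 2 ≤ s^6 := by
    calc (2:ℝ) ≤ 64^6 := by norm_num
      _ ≤ s^6 := by gcongr
  have hb1 : (b:ℝ) ≤ s^6 := by rw [hb]; exact Nat.floor_le (pow_nonneg hs0.le 6)
  have hb2 : s^6 / 2 ≤ b := by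
    have := Nat.lt_floor_add_one (s^6)
    rw [← hb] at this
    linarith
  have hbpos : 1 ≤ b := by
    have : (1:ℝ) ≤ b := by linarith
    exact_mod_cast this
  have hbn : b ≤ n := by
    have : (b:ℝ) ≤ n := by
      rw [en]
      refine hb1.trans (pow_le_pow_right₀ (by linarith) (by norm_num))
    exact_mod_cast this
  have hkn : (k n : ℝ) ≤ s^5 := by
    rw [div_lt_one hn0, en] at h3
    have : (k n : ℝ)^2 ≤ (s^5)^2 := by nlinarith
    exact (sq_le_sq₀ (by positivity) (by positivity)).1 this
  have hk8 : 8 ≤ ε * k n := by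
    rw [div_le_iff₀ hε] at h1; linarith
  have hkb : (3 + 2 * ε) * k n ≤ b / 32 := by
    calc (3 + 2 * ε) * k n ≤ (s / 64) * s^5 := by
          gcongr
          linarith
      _ = s^6 / 2 / 32 := by ring
      _ ≤ b / 32 := by gcongr
  refine (final_bound ε hε h4 hbpos hbn hk8 hkb).trans ?_
  rw [e15]
  have f1 : (b:ℝ)^3 / (n:ℝ)^2 ≤ 1 / s^2 := by
    rw [en]
    calc (b:ℝ)^3 / (s^10)^2 ≤ (s^6)^3 / (s^10)^2 := by gcongr
      _ = _ := by field_simp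
  have f2 : (n:ℝ) / (b:ℝ)^2 ≤ 4 * (1 / s^2) := by
    rw [en]
    calc s^10 / (b:ℝ)^2 ≤ s^10 / (s^6/2)^2 := by gcongr
      _ = _ := by field_simp; norm_num
  gcongr

end KC

theorem stmt8 (k : ℕ → ℕ) (hk1 : Filter.Tendsto k Filter.atTop Filter.atTop)
    (hk2 : Filter.Tendsto (fun n : ℕ => ((k n : ℝ))^2 / (n : ℝ)) Filter.atTop (nhds 0)) :
    ∀ ε : ℝ, 0 < ε →
      Filter.Tendsto
        (fun n : ℕ => prob n (fun C =>
          ε < |((n : ℝ) - (kCoreSize n (k n) C : ℝ)) / (k n : ℝ) - 1|))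
        Filter.atTop (nhds 0) := by
  exact fun ε hε => KC.main k hk1 hk2 ε hε
end

section
/- With high probability, the set Len_{⌊n^{3/5}⌋} of chords of D_n of length at least ⌊n^{3/5}⌋ is strongly connected as a subdiagram of the random oriented chord diagram D_n: for any two chords c, d of length at least ⌊n^{3/5}⌋ there is a directed path from c to d in the directed intersection graph of D_n using only chords of length at least ⌊n^{3/5}⌋. -/
open scoped Classical
open Finset Filter

/-! ### Deterministic part -/

/-- Endpoints in the block `[s, s+m)` matched to the region `[p, p+r)`. -/
noncomputable def famF {n : ℕ} (C : ChordDiagram n) (m r s p : ℕ) : Finset (Fin (2*n)) :=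
  Finset.univ.filter fun e => (s ≤ (e:ℕ) ∧ (e:ℕ) < s + m) ∧ (p ≤ (C.1 e : ℕ) ∧ (C.1 e : ℕ) < p + r)

lemma mem_famF {n : ℕ} {C : ChordDiagram n} {m r s p : ℕ} {e : Fin (2*n)} :
    e ∈ famF C m r s p ↔
      (s ≤ (e:ℕ) ∧ (e:ℕ) < s + m) ∧ (p ≤ (C.1 e : ℕ) ∧ (C.1 e : ℕ) < p + r) := by
  simp [famF]

lemma crosses_iff {n : ℕ} (C : ChordDiagram n) (x u : Fin (2*n)) :
    Crosses C x u ↔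
      (((min (x:ℕ) (C.1 x) < u ∧ (u:ℕ) < max (x:ℕ) (C.1 x)) ∧
        ¬ (min (x:ℕ) (C.1 x) < (C.1 u : ℕ) ∧ (C.1 u : ℕ) < max (x:ℕ) (C.1 x))) ∨
       ((min (x:ℕ) (C.1 x) < (C.1 u : ℕ) ∧ (C.1 u : ℕ) < max (x:ℕ) (C.1 x)) ∧
        ¬ (min (x:ℕ) (C.1 x) < u ∧ (u:ℕ) < max (x:ℕ) (C.1 x)))) := by
  simp only [Crosses, Between, Fin.lt_def, Fin.coe_min, Fin.coe_max]
  exact Iff.rfl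

lemma cd_val {n : ℕ} (C : ChordDiagram n) (x u : Fin (2*n)) :
    ((x:ℕ) = u ↔ (C.1 x : ℕ) = C.1 u) ∧ ((x:ℕ) = C.1 u ↔ (C.1 x : ℕ) = u) ∧
      (C.1 x : ℕ) ≠ x := by
  have h1 := C.2.1
  have h2 := C.2.2
  refine ⟨?_, ?_, ?_⟩
  · rw [← Fin.ext_iff, ← Fin.ext_iff]
    exact ⟨fun h => by rw [h], fun h => by rw [← h1 x, h, h1]⟩
  · rw [← Fin.ext_iff, ← Fin.ext_iff]
    exact ⟨fun h => by rw [h, h1], fun h => by rw [← h, h1]⟩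
  · intro h
    exact h2 x (Fin.ext h)

lemma crosses_symm {n : ℕ} (C : ChordDiagram n) (x u : Fin (2*n)) (h : Crosses C x u) :
    Crosses C u x := by
  rw [crosses_iff] at *
  obtain ⟨a1, a2, a3⟩ := cd_val C x u
  obtain ⟨b1, b2, b3⟩ := cd_val C u x
  omega

/-- The property extracted from the randomness. -/
def HypO {n : ℕ} (D : OrientedChordDiagram n) (m r : ℕ) : Prop :=
  ∀ s p, m ∣ s → r ∣ p → s + m ≤ 2*n → p + r ≤ 2*n → (s + m ≤ p ∨ p + r ≤ s) →
    (famF D.1 m r s p).Nonempty ∧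
    ∀ a b, b ≠ a → b ≠ D.1.1 a →
      (∀ e ∈ famF D.1 m r s p, Crosses D.1 a e ∧ Crosses D.1 b e) →
      ∃ e ∈ famF D.1 m r s p, OverD D a e ∧ OverD D e b

lemma exists_mult (m u v : ℕ) (hm : 1 ≤ m) (h : u + 2*m ≤ v) :
    ∃ s, m ∣ s ∧ u ≤ s ∧ s + m ≤ v := by
  refine ⟨(u / m + 1) * m, Dvd.intro_left _ rfl, ?_, ?_⟩
  · have := Nat.div_add_mod u m
    have := Nat.mod_lt u hm
    rw [add_mul, mul_comm (u/m)]; omega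
  · have := Nat.div_mul_le_self u m
    rw [add_mul]; omega

/-- hub chord around the region starting at `p`. -/
def IsHub {n : ℕ} (C : ChordDiagram n) (r p : ℕ) (h : Fin (2*n)) : Prop :=
  p ≤ (h:ℕ) + r ∧ (h:ℕ) < p ∧ p + r ≤ (C.1 h : ℕ) ∧ (C.1 h : ℕ) < p + 2*r

lemma chordLength_ge {n : ℕ} (C : ChordDiagram n) (k : ℕ) (x : Fin (2*n)) (hk : 1 ≤ k) :
    k ≤ chordLength C x ↔
     (((x:ℕ) + k + 1 ≤ C.1 x ∧ (C.1 x : ℕ) + k + 1 ≤ 2*n + x) ∨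
      ((C.1 x:ℕ) + k + 1 ≤ x ∧ (x : ℕ) + k + 1 ≤ 2*n + C.1 x)) := by
  unfold chordLength
  omega

lemma hub_exists {n m r : ℕ} (D : OrientedChordDiagram n) (H : HypO D m r) (hm : 1 ≤ m)
    (hr : 2*m ≤ r) (p : ℕ) (hp : r ∣ p) (hp1 : r ≤ p) (hp2 : p + 2*r ≤ 2*n) :
    ∃ h, IsHub D.1 r p h := by
  obtain ⟨s, hs, h1, h2⟩ := exists_mult m (p - r) p hm (by omega)
  obtain ⟨⟨e, he⟩, -⟩ := H s (p + r) hs ((Nat.dvd_add_right hp).2 dvd_rfl) (by omega) (by omega)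
    (by omega)
  rw [mem_famF] at he
  exact ⟨e, by unfold IsHub; omega⟩

/-- The relation of the statement. -/
abbrev relS {n : ℕ} (D : OrientedChordDiagram n) (k : ℕ) (a b : Fin (2*n)) : Prop :=
  a ∈ {x | k ≤ chordLength D.1 x} ∧ b ∈ {x | k ≤ chordLength D.1 x} ∧ OverD D a b

lemma hub_long {n r k : ℕ} (C : ChordDiagram n) (hk : 1 ≤ k) (hkr : k ≤ r)
    (hrn : 10 * r ≤ n) (p : ℕ) (h : Fin (2*n)) (hh : IsHub C r p h) :
    k ≤ chordLength C h := by
  rw [chordLength_ge _ _ _ hk]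
  unfold IsHub at hh
  omega

lemma hub_hub_far {n m r k : ℕ} (D : OrientedChordDiagram n) (H : HypO D m r) (hm : 1 ≤ m)
    (hmk : 4 * m ≤ k) (hkr : k ≤ r) (hrn : 10 * r ≤ n)
    (p q : ℕ) (hp : r ∣ p) (hp1 : r ≤ p) (hp2 : p + 2*r ≤ 2*n)
    (hq : r ∣ q) (hq1 : r ≤ q) (hq2 : q + 2*r ≤ 2*n) (hpq : p + 2*r ≤ q ∨ q + 2*r ≤ p)
    (h h' : Fin (2*n)) (hh : IsHub D.1 r p h) (hh' : IsHub D.1 r q h') :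
    Relation.ReflTransGen (relS D k) h h' := by
  obtain ⟨s, hs, h1, h2⟩ := exists_mult m p (p+r) hm (by omega)
  have hl := hub_long (k := k) D.1 (by omega) hkr hrn p h hh
  have hl' := hub_long (k := k) D.1 (by omega) hkr hrn q h' hh'
  unfold IsHub at hh hh'
  obtain ⟨-, H2⟩ := H s q hs hq (by omega) (by omega) (by omega)
  obtain ⟨e, he, e1, e2⟩ := H2 h h' (by
      rintro rfl; omega) (by
      intro hx
      have := cd_val D.1 h' h
      have : (h' : ℕ) = D.1.1 h := by rw [hx]
      omega) (by
      intro e he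
      rw [mem_famF] at he
      rw [crosses_iff, crosses_iff]
      omega)
  rw [mem_famF] at he
  have hle : k ≤ chordLength D.1 e := by
    rw [chordLength_ge _ _ _ (by omega)]
    omega
  exact (Relation.ReflTransGen.single ⟨hl, hle, e1⟩).tail ⟨hle, hl', e2⟩

lemma hub_hub {n m r k : ℕ} (D : OrientedChordDiagram n) (H : HypO D m r) (hm : 1 ≤ m)
    (hmk : 4 * m ≤ k) (hkr : k ≤ r) (hrn : 10 * r ≤ n)
    (p q : ℕ) (hp : r ∣ p) (hp1 : r ≤ p) (hp2 : p + 2*r ≤ 2*n)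
    (hq : r ∣ q) (hq1 : r ≤ q) (hq2 : q + 2*r ≤ 2*n)
    (h h' : Fin (2*n)) (hh : IsHub D.1 r p h) (hh' : IsHub D.1 r q h') :
    Relation.ReflTransGen (relS D k) h h' := by
  have key : ∀ l, r ∣ l → r ≤ l → l + 2 * r ≤ 2 * n → (p + 2*r ≤ l ∨ l + 2*r ≤ p) →
      (l + 2*r ≤ q ∨ q + 2*r ≤ l) → Relation.ReflTransGen (relS D k) h h' := by
    intro l hl hl1 hl2 h1 h2
    obtain ⟨g, hg⟩ := hub_exists D H hm (by omega) l hl hl1 hl2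
    exact (hub_hub_far D H hm hmk hkr hrn p l hp hp1 hp2 hl hl1 hl2 h1 h g hh hg).trans
      (hub_hub_far D H hm hmk hkr hrn l q hl hl1 hl2 hq hq1 hq2 h2 g h' hg hh')
  by_cases c1 : (p + 2*r ≤ 1*r ∨ 1*r + 2*r ≤ p) ∧ (1*r + 2*r ≤ q ∨ q + 2*r ≤ 1*r)
  · exact key (1*r) (Dvd.intro_left _ rfl) (by omega) (by omega) c1.1 c1.2
  by_cases c2 : (p + 2*r ≤ 5*r ∨ 5*r + 2*r ≤ p) ∧ (5*r + 2*r ≤ q ∨ q + 2*r ≤ 5*r)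
  · exact key (5*r) (Dvd.intro_left _ rfl) (by omega) (by omega) c2.1 c2.2
  · exact key (9*r) (Dvd.intro_left _ rfl) (by omega) (by omega) (by omega) (by omega)

lemma long_sep {n m r k : ℕ} (C : ChordDiagram n) (hm : 1 ≤ m)
    (hmk : 4 * m ≤ k) (hkr : k ≤ r) (hrn : 10 * r ≤ n) (c : Fin (2*n))
    (hc : k ≤ chordLength C c) :
    ∃ s p, m ∣ s ∧ r ∣ p ∧ r ≤ p ∧ p + 2*r ≤ 2*n ∧ s + m ≤ 2*n ∧
      ((min (c:ℕ) (C.1 c) < s ∧ s + m ≤ max (c:ℕ) (C.1 c) ∧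
        (p + 2*r ≤ min (c:ℕ) (C.1 c) ∨ max (c:ℕ) (C.1 c) < p - r)) ∨
       ((s + m ≤ min (c:ℕ) (C.1 c) ∨ max (c:ℕ) (C.1 c) < s) ∧
        min (c:ℕ) (C.1 c) < p - r ∧ p + 2*r ≤ max (c:ℕ) (C.1 c))) := by
  rw [chordLength_ge _ _ _ (by omega)] at hc
  have h1 := c.2
  have h2 := (C.1 c).2
  set lo := min (c:ℕ) (C.1 c) with hlo
  set hi := max (c:ℕ) (C.1 c) with hhi
  have hlh : lo + k + 1 ≤ hi ∧ hi + k + 1 ≤ 2*n + lo ∧ hi < 2*n := by omega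
  clear_value lo hi
  clear hc
  have reg : ∀ u v, u + 4*r ≤ v → ∃ p, r ∣ p ∧ r ≤ p ∧ u ≤ p - r ∧ p + 2*r ≤ v := by
    intro u v huv
    obtain ⟨p, a, b, c⟩ := exists_mult r (u) (v-2*r) (by omega) (by omega)
    exact ⟨p + r, (Nat.dvd_add_right a).2 dvd_rfl, by omega, by omega, by omega⟩
  by_cases hin : n ≤ hi - lo
  · obtain ⟨p, p1, p2, p3, p4⟩ := reg (lo+1) hi (by omega)
    by_cases hl : 2*m ≤ lo
    · obtain ⟨s, s1, s2, s3⟩ := exists_mult m 0 lo hm (by omega)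
      exact ⟨s, p, s1, p1, p2, by omega, by omega, by omega⟩
    · obtain ⟨s, s1, s2, s3⟩ := exists_mult m (hi+1) (2*n) hm (by omega)
      exact ⟨s, p, s1, p1, p2, by omega, by omega, by omega⟩
  · obtain ⟨s, s1, s2, s3⟩ := exists_mult m (lo+1) hi hm (by omega)
    by_cases hl : 4*r ≤ lo
    · obtain ⟨p, p1, p2, p3, p4⟩ := reg 0 lo (by omega)
      exact ⟨s, p, s1, p1, p2, by omega, by omega, by omega⟩
    · obtain ⟨p, p1, p2, p3, p4⟩ := reg (hi+1) (2*n) (by omega)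
      exact ⟨s, p, s1, p1, p2, by omega, by omega, by omega⟩

lemma long_hub {n m r k : ℕ} (D : OrientedChordDiagram n) (H : HypO D m r) (hm : 1 ≤ m)
    (hmk : 4 * m ≤ k) (hkr : k ≤ r) (hrn : 10 * r ≤ n) (c : Fin (2*n))
    (hc : k ≤ chordLength D.1 c) :
    ∃ p h, r ∣ p ∧ r ≤ p ∧ p + 2*r ≤ 2*n ∧ IsHub D.1 r p h ∧
      Relation.ReflTransGen (relS D k) c h ∧ Relation.ReflTransGen (relS D k) h c := by
  obtain ⟨s, p, hs, hp, hp1, hp2, hs2, hsep⟩ := long_sep D.1 hm hmk hkr hrn c hc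
  obtain ⟨h, hh⟩ := hub_exists D H hm (by omega) p hp hp1 hp2
  refine ⟨p, h, hp, hp1, hp2, hh, ?_⟩
  have hl := hub_long (k := k) D.1 (by omega) hkr hrn p h hh
  unfold IsHub at hh
  obtain ⟨-, H2⟩ := H s p hs hp hs2 (by omega) (by omega)
  have hcr : ∀ e ∈ famF D.1 m r s p, Crosses D.1 c e ∧ Crosses D.1 h e := by
    intro e he
    rw [mem_famF] at he
    rw [crosses_iff, crosses_iff]
    omega
  have hlen : ∀ e ∈ famF D.1 m r s p, k ≤ chordLength D.1 e := by
    intro e he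
    rw [mem_famF] at he
    have := e.2
    rw [chordLength_ge _ _ _ (by omega)]
    omega
  have hv := cd_val D.1 c h
  have hne : h ≠ c := by rintro rfl; omega
  have hne' : h ≠ D.1.1 c := by
    intro hx
    have : (h : ℕ) = D.1.1 c := by rw [hx]
    omega
  have hne'' : c ≠ D.1.1 h := by
    intro hx
    have : (c : ℕ) = D.1.1 h := by rw [← hx]
    omega
  obtain ⟨e, he, e1, e2⟩ := H2 c h hne hne' hcr
  obtain ⟨f, hf, f1, f2⟩ := H2 h c hne.symm hne'' (fun e he => (hcr e he).symm)
  exact ⟨(Relation.ReflTransGen.single ⟨hc, hlen e he, e1⟩).tail ⟨hlen e he, hl, e2⟩,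
    (Relation.ReflTransGen.single ⟨hl, hlen f hf, f1⟩).tail ⟨hlen f hf, hc, f2⟩⟩

theorem det_main {n m r k : ℕ} (D : OrientedChordDiagram n) (H : HypO D m r) (hm : 1 ≤ m)
    (hmk : 4 * m ≤ k) (hkr : k ≤ r) (hrn : 10 * r ≤ n) :
    StronglyConnectedIn D {x | k ≤ chordLength D.1 x} := by
  intro c hc d hd
  obtain ⟨p, h, p1, p2, p3, hh, a1, a2⟩ := long_hub D H hm hmk hkr hrn c hc
  obtain ⟨q, g, q1, q2, q3, hg, b1, b2⟩ := long_hub D H hm hmk hkr hrn d hd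
  exact (a1.trans (hub_hub D H hm hmk hkr hrn p q p1 p2 p3 q1 q2 q3 h g hh hg)).trans b2

/-! ### Orientation part -/

lemma flip_count {α κ : Type*} [Fintype α] [DecidableEq α] [DecidableEq κ] (F : Finset κ)
    (p q : κ → α × α) (s t : κ → Bool)
    (hpq : ∀ h ∈ F, ∀ h' ∈ F, p h ≠ q h')
    (hp : ∀ h ∈ F, ∀ h' ∈ F, p h = p h' → h = h')
    (hq : ∀ h ∈ F, ∀ h' ∈ F, q h = q h' → h = h') :
    4 ^ F.card * (Finset.univ.filter fun β : α → α → Bool =>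
        ∀ h ∈ F, ¬ (β (p h).1 (p h).2 = s h ∧ β (q h).1 (q h).2 = t h)).card
      ≤ 3 ^ F.card * Fintype.card (α → α → Bool) := by
  induction F using Finset.induction_on with
  | empty => simp
  | insert x F hx ih =>
    have ih := ih (fun h hh h' hh' => hpq h (mem_insert_of_mem hh) h' (mem_insert_of_mem hh'))
      (fun h hh h' hh' => hp h (mem_insert_of_mem hh) h' (mem_insert_of_mem hh'))
      (fun h hh h' hh' => hq h (mem_insert_of_mem hh) h' (mem_insert_of_mem hh'))
    set B := (Finset.univ.filter fun β : α → α → Bool =>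
        ∀ h ∈ F, ¬ (β (p h).1 (p h).2 = s h ∧ β (q h).1 (q h).2 = t h)) with hB
    set G := B.filter fun β => β (p x).1 (p x).2 = s x ∧ β (q x).1 (q x).2 = t x with hG
    have hB' : (Finset.univ.filter fun β : α → α → Bool =>
        ∀ h ∈ insert x F, ¬ (β (p h).1 (p h).2 = s h ∧ β (q h).1 (q h).2 = t h)) =
        B.filter fun β => ¬ (β (p x).1 (p x).2 = s x ∧ β (q x).1 (q x).2 = t x) := by
      ext β
      simp only [hB, mem_filter, mem_univ, true_and, forall_mem_insert]
      tauto
    rw [hB']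
    have hsum := Finset.card_filter_add_card_filter_not (s := B)
      (fun β : α → α → Bool => β (p x).1 (p x).2 = s x ∧ β (q x).1 (q x).2 = t x)
    have hxx := hpq x (mem_insert_self _ _) x (mem_insert_self _ _)
    have h4 : B.card ≤ 4 * G.card := by
      let φ : (α → α → Bool) → (α → α → Bool) := fun β i j =>
        if (i, j) = p x then s x else if (i, j) = q x then t x else β i j
      refine Finset.card_le_mul_card_image_of_maps_to (f := φ) ?_ 4 ?_
      · intro β hβ
        simp only [hB, mem_filter, mem_univ, true_and] at hβ
        simp only [hG, hB, mem_filter, mem_univ, true_and]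
        refine ⟨?_, ?_, ?_⟩
        · intro h hh
          have n1 : p h ≠ p x := fun e => hx (by
            rwa [← hp h (mem_insert_of_mem hh) x (mem_insert_self _ _) e])
          have n2 : p h ≠ q x := hpq h (mem_insert_of_mem hh) x (mem_insert_self _ _)
          have n3 : q h ≠ p x := (hpq x (mem_insert_self _ _) h (mem_insert_of_mem hh)).symm
          have n4 : q h ≠ q x := fun e => hx (by
            rwa [← hq h (mem_insert_of_mem hh) x (mem_insert_self _ _) e])
          simp only [φ, Prod.mk.eta, if_neg n1, if_neg n2, if_neg n3, if_neg n4]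
          exact hβ h hh
        · simp [φ]
        · simp [φ, hxx.symm]
      · intro γ hγ
        calc _ ≤ (Finset.univ : Finset (Bool × Bool)).card := by
              refine Finset.card_le_card_of_injOn
                (fun β => (β (p x).1 (p x).2, β (q x).1 (q x).2)) (by simp) ?_
              intro β hβ β' hβ' hE
              simp only [coe_filter, Set.mem_ofPred_eq] at hβ hβ'
              simp only [Prod.mk.injEq] at hE
              have hφ : φ β = φ β' := hβ.2.trans hβ'.2.symm
              funext i j
              by_cases e1 : (i, j) = p x
              · have := hE.1
                rw [← e1] at this
                exact this
              by_cases e2 : (i, j) = q x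
              · have := hE.2
                rw [← e2] at this
                exact this
              · have := congrFun (congrFun hφ i) j
                simpa only [φ, if_neg e1, if_neg e2] using this
          _ = 4 := by simp
    rw [Finset.card_insert_of_notMem hx, pow_succ, pow_succ]
    rw [← hG] at hsum
    have : 4 * (B.filter fun β => ¬ (β (p x).1 (p x).2 = s x ∧ β (q x).1 (q x).2 = t x)).card
        ≤ 3 * B.card := by omega
    calc _ = 4 ^ F.card * (4 * (B.filter fun β => ¬ (β (p x).1 (p x).2 = s x ∧
            β (q x).1 (q x).2 = t x)).card) := by ring
      _ ≤ 4 ^ F.card * (3 * B.card) := Nat.mul_le_mul_left _ this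
      _ = 3 * (4 ^ F.card * B.card) := by ring
      _ ≤ 3 * (3 ^ F.card * Fintype.card (α → α → Bool)) := Nat.mul_le_mul_left _ ih
      _ = _ := by ring

lemma overD_iff {n : ℕ} (C : ChordDiagram n) (β : Fin (2*n) → Fin (2*n) → Bool)
    (x u : Fin (2*n)) (h : Crosses C x u) :
    OverD (C, β) x u ↔ β (min (chordRep C x) (chordRep C u)) (max (chordRep C x) (chordRep C u))
      = decide (chordRep C x ≤ chordRep C u) := by
  unfold OverD
  simp only [h, true_and]
  rcases le_or_gt (chordRep C x) (chordRep C u) with h1 | h1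
  · simp [h1, not_lt.2 h1]
  · simp [h1, not_le.2 h1, h1.le]

lemma rep_ne {n : ℕ} (C : ChordDiagram n) (x u : Fin (2*n)) (h : Crosses C x u) :
    chordRep C x ≠ chordRep C u := by
  rw [crosses_iff] at h
  have h1 := cd_val C x u
  have h2 := cd_val C u x
  intro h3
  have h4 : (min x (C.1 x)).val = (min u (C.1 u)).val := by
    unfold chordRep at h3; rw [h3]
  rw [Fin.coe_min, Fin.coe_min] at h4
  omega

lemma rep_ne' {n : ℕ} (C : ChordDiagram n) (x u : Fin (2*n)) (h : u ≠ x) (h' : u ≠ C.1 x) :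
    chordRep C x ≠ chordRep C u := by
  have h1 := cd_val C x u
  have h2 := cd_val C u x
  intro h3
  have h4 : (min x (C.1 x)).val = (min u (C.1 u)).val := by
    unfold chordRep at h3; rw [h3]
  rw [Fin.coe_min, Fin.coe_min] at h4
  have h5 : (u : ℕ) ≠ x := fun e => h (Fin.ext e)
  have h6 : (u : ℕ) ≠ C.1 x := fun e => h' (Fin.ext e)
  omega

lemma minmax_inj {α : Type*} [LinearOrder α] (a b c d : α)
    (h : (min a b, max a b) = (min c d, max c d)) : (a = c ∧ b = d) ∨ (a = d ∧ b = c) := by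
  rw [Prod.mk.injEq] at h
  rcases le_total a b with h1 | h1 <;> rcases le_total c d with h2 | h2 <;>
    simp [h1, h2] at h <;> tauto

lemma orient_count {n : ℕ} (C : ChordDiagram n) (m r s p : ℕ)
    (hd : s + m ≤ p ∨ p + r ≤ s) (a b : Fin (2*n)) (hne : b ≠ a) (hne' : b ≠ C.1 a)
    (hcr : ∀ e ∈ famF C m r s p, Crosses C a e ∧ Crosses C b e) :
    4 ^ (famF C m r s p).card * (Finset.univ.filter fun β : Fin (2*n) → Fin (2*n) → Bool =>
        ¬ ∃ e ∈ famF C m r s p, OverD (C, β) a e ∧ OverD (C, β) e b).card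
      ≤ 3 ^ (famF C m r s p).card * Fintype.card (Fin (2*n) → Fin (2*n) → Bool) := by
  set F := famF C m r s p with hF
  have hinj : ∀ e ∈ F, ∀ f ∈ F, chordRep C e = chordRep C f → e = f := by
    intro e he f hf h
    rw [hF, mem_famF] at he hf
    by_contra hef
    have h1 := cd_val C e f
    have h2 : f ≠ e := fun e => hef e.symm
    refine rep_ne' C e f h2 ?_ h
    intro hx
    have : (f : ℕ) = C.1 e := by rw [hx]
    omega
  have key := flip_count F
    (fun e => (min (chordRep C a) (chordRep C e), max (chordRep C a) (chordRep C e)))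
    (fun e => (min (chordRep C e) (chordRep C b), max (chordRep C e) (chordRep C b)))
    (fun e => decide (chordRep C a ≤ chordRep C e))
    (fun e => decide (chordRep C e ≤ chordRep C b)) ?_ ?_ ?_
  · refine le_trans (Nat.mul_le_mul_left _ (Finset.card_le_card ?_)) key
    intro β hβ
    simp only [mem_filter, mem_univ, true_and, not_exists, not_and] at hβ ⊢
    intro e he h1 h2
    refine hβ e he ((overD_iff C β a e (hcr e he).1).2 h1)
      ((overD_iff C β e b (crosses_symm _ _ _ (hcr e he).2)).2 h2)
  · intro e he f hf h
    rcases minmax_inj _ _ _ _ h with ⟨h1, h2⟩ | ⟨h1, h2⟩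
    · exact rep_ne C _ _ (hcr e he).2 h2.symm
    · exact rep_ne' C a b hne hne' h1
  · intro e he f hf h
    rcases minmax_inj _ _ _ _ h with ⟨h1, h2⟩ | ⟨h1, h2⟩
    · exact hinj e he f hf h2
    · exact hinj e he f hf (h2.trans h1)
  · intro e he f hf h
    rcases minmax_inj _ _ _ _ h with ⟨h1, h2⟩ | ⟨h1, h2⟩
    · exact hinj e he f hf h1
    · exact hinj e he f hf (h1.trans h2)

/-! ### Matching part -/

/-- Conjugation of a chord diagram by a permutation of the endpoints. -/
def conjD {n : ℕ} (σ : Equiv.Perm (Fin (2*n))) (C : ChordDiagram n) : ChordDiagram n :=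
  ⟨fun i => σ (C.1 (σ.symm i)), by
    refine ⟨fun i => ?_, fun i h => ?_⟩
    · simp [C.2.1]
    · apply C.2.2 (σ.symm i)
      exact σ.injective (by simpa using h)⟩

lemma conjD_symm {n : ℕ} (σ : Equiv.Perm (Fin (2*n))) (C : ChordDiagram n) :
    conjD σ.symm (conjD σ C) = C := by
  apply Subtype.ext
  funext i
  simp [conjD]

lemma conj_count {n : ℕ} (σ : Equiv.Perm (Fin (2*n))) (P Q : ChordDiagram n → Prop)
    [DecidablePred P] [DecidablePred Q] (h : ∀ C, P C → Q (conjD σ C)) :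
    (Finset.univ.filter P).card ≤ (Finset.univ.filter Q).card := by
  refine Finset.card_le_card_of_injOn (conjD σ) ?_ ?_
  · intro C hC
    simp only [coe_filter, mem_univ, true_and, Set.mem_ofPred_eq] at hC ⊢
    exact h C hC
  · intro C _ C' _ hE
    rw [← conjD_symm σ C, hE, conjD_symm]

lemma count_one {n : ℕ} (x y : Fin (2*n)) (hxy : y ≠ x) :
    (2*n - 1) * (Finset.univ.filter fun C : ChordDiagram n => C.1 x = y).card
      = Fintype.card (ChordDiagram n) := by
  have h := Finset.card_eq_sum_card_fiberwise (s := (Finset.univ : Finset (ChordDiagram n)))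
    (t := Finset.univ.erase x) (f := fun C => C.1 x) (by
      intro C _
      simpa using C.2.2 x)
  rw [← Finset.card_univ, h, Finset.sum_congr rfl (g := fun _ =>
    (Finset.univ.filter fun C : ChordDiagram n => C.1 x = y).card)]
  · simp
  · intro z hz
    have hz : z ≠ x := by simpa using hz
    apply le_antisymm
    · refine conj_count (Equiv.swap z y) _ _ ?_
      intro C hC
      simp [conjD, Equiv.swap_apply_of_ne_of_ne hz.symm hxy.symm, hC]
    · refine conj_count (Equiv.swap y z) _ _ ?_
      intro C hC
      simp [conjD, Equiv.swap_apply_of_ne_of_ne hxy.symm hz.symm, hC]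

lemma count_two {n : ℕ} (x y x' y' : Fin (2*n)) (hxy : y ≠ x) (h1 : x' ≠ x) (h2 : x' ≠ y)
    (h3 : y' ≠ x) (h4 : y' ≠ y) (h5 : y' ≠ x') :
    (2*n - 3) * (Finset.univ.filter fun C : ChordDiagram n => C.1 x = y ∧ C.1 x' = y').card
      = (Finset.univ.filter fun C : ChordDiagram n => C.1 x = y).card := by
  have h := Finset.card_eq_sum_card_fiberwise
    (s := (Finset.univ.filter fun C : ChordDiagram n => C.1 x = y))
    (t := ((Finset.univ.erase x).erase y).erase x') (f := fun C => C.1 x') (by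
      intro C hC
      have hC : C.1 x = y := by simpa using hC
      have e1 := C.2.1
      simp only [coe_erase, coe_univ, Set.mem_sdiff, Set.mem_univ, Set.mem_singleton_iff, true_and]
      refine ⟨⟨?_, ?_⟩, C.2.2 x'⟩
      · intro h
        apply h2
        rw [← hC, ← h, e1]
      · intro h
        apply h1
        rw [← e1 x', h, ← hC, e1])
  rw [h, Finset.sum_congr rfl (g := fun _ =>
    (Finset.univ.filter fun C : ChordDiagram n => C.1 x = y ∧ C.1 x' = y').card)]
  · rw [Finset.sum_const, card_erase_of_mem, card_erase_of_mem, card_erase_of_mem, card_univ,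
      Fintype.card_fin, smul_eq_mul]
    · rfl
    · simp
    · simp [hxy]
    · simp [h1, h2]
  · intro z hz
    have hz : z ≠ x' ∧ z ≠ y ∧ z ≠ x := by simpa using hz
    obtain ⟨z1, z2, z3⟩ := hz
    rw [Finset.filter_filter]
    apply le_antisymm
    · refine conj_count (Equiv.swap z y') _ _ ?_
      rintro C ⟨hC, hC'⟩
      simp [conjD, Equiv.swap_apply_of_ne_of_ne z3.symm h3.symm,
        Equiv.swap_apply_of_ne_of_ne z2.symm h4.symm,
        Equiv.swap_apply_of_ne_of_ne z1.symm h5.symm, hC, hC']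
    · refine conj_count (Equiv.swap y' z) _ _ ?_
      rintro C ⟨hC, hC'⟩
      simp [conjD, Equiv.swap_apply_of_ne_of_ne h3.symm z3.symm,
        Equiv.swap_apply_of_ne_of_ne h4.symm z2.symm,
        Equiv.swap_apply_of_ne_of_ne h5.symm z1.symm, hC, hC']

/-- number of matched pairs from `I` to `R`. -/
noncomputable def numIR {n : ℕ} (I R : Finset (Fin (2*n))) (C : ChordDiagram n) : ℝ :=
  ∑ z ∈ I ×ˢ R, if C.1 z.1 = z.2 then 1 else 0

lemma sum_ind {n : ℕ} (P : ChordDiagram n → Prop) [DecidablePred P] :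
    ∑ C : ChordDiagram n, (if P C then (1:ℝ) else 0) = ((Finset.univ.filter P).card : ℝ) := by
  rw [Finset.sum_boole]

lemma moment_one {n : ℕ} (hn : 2 ≤ n) (I R : Finset (Fin (2*n))) (hd : Disjoint I R) :
    ∑ C : ChordDiagram n, numIR I R C
      = I.card * R.card * ((Fintype.card (ChordDiagram n) : ℝ) / (2*n - 1)) := by
  unfold numIR
  rw [Finset.sum_comm, Finset.sum_congr rfl (g := fun _ =>
    ((Fintype.card (ChordDiagram n) : ℝ) / (2*n - 1)))]
  · simp
  · intro z hz
    rw [mem_product] at hz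
    have hne : z.2 ≠ z.1 := fun h => (Finset.disjoint_left.1 hd hz.1) (h ▸ hz.2)
    rw [sum_ind, ← count_one z.1 z.2 hne]
    have : ((2*n-1 : ℕ) : ℝ) = 2*n - 1 := by
      rw [Nat.cast_sub (by omega)]; push_cast; ring
    have h0 : (2*n - 1 : ℝ) ≠ 0 := by
      have : (2:ℝ) ≤ n := by exact_mod_cast hn
      linarith
    rw [Nat.cast_mul, this]
    field_simp

lemma moment_two {n : ℕ} (hn : 2 ≤ n) (I R : Finset (Fin (2*n))) (hd : Disjoint I R)
    (hR : 2 * R.card ≤ 2*n - 1) :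
    ∑ C : ChordDiagram n, (numIR I R C)^2
      ≤ I.card * R.card * ((Fintype.card (ChordDiagram n) : ℝ) / (2*n - 1)) *
        (1 + I.card * R.card / (2*n-1)) := by
  have hn' : (2:ℝ) ≤ n := by exact_mod_cast hn
  have c1 : ((2*n-1 : ℕ) : ℝ) = 2*n - 1 := by
    rw [Nat.cast_sub (by omega)]; push_cast; ring
  have c3 : ((2*n-3 : ℕ) : ℝ) = 2*n - 3 := by
    rw [Nat.cast_sub (by omega)]; push_cast; ring
  have p1 : (0:ℝ) < 2*n - 1 := by linarith
  have p3 : (0:ℝ) < 2*n - 3 := by linarith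
  set A : ℝ := (Fintype.card (ChordDiagram n) : ℝ) / (2*n - 1) with hA
  have hA0 : 0 ≤ A := by positivity
  have hexp : ∀ C : ChordDiagram n, (numIR I R C)^2 = ∑ z ∈ I ×ˢ R, ∑ w ∈ I ×ˢ R,
      (if C.1 z.1 = z.2 ∧ C.1 w.1 = w.2 then (1:ℝ) else 0) := by
    intro C
    unfold numIR
    rw [sq, Finset.sum_mul_sum]
    refine Finset.sum_congr rfl fun z _ => Finset.sum_congr rfl fun w _ => ?_
    by_cases h1 : C.1 z.1 = z.2 <;> by_cases h2 : C.1 w.1 = w.2 <;> simp [h1, h2]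
  simp_rw [hexp]
  rw [Finset.sum_comm]
  have hz : ∀ z ∈ I ×ˢ R, ∑ C : ChordDiagram n, ∑ w ∈ I ×ˢ R,
      (if C.1 z.1 = z.2 ∧ C.1 w.1 = w.2 then (1:ℝ) else 0) ≤ A * (1 + I.card * R.card / (2*n-1)) := by
    rintro ⟨x, y⟩ hz
    rw [mem_product] at hz
    obtain ⟨hx, hy⟩ := hz
    simp only at hx hy
    have hne : ∀ a ∈ I, ∀ b ∈ R, b ≠ a := fun a ha b hb h =>
      (Finset.disjoint_left.1 hd ha) (h ▸ hb)
    have hA1 : ((Finset.univ.filter fun C : ChordDiagram n => C.1 x = y).card : ℝ) = A := by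
      rw [hA, ← count_one x y (hne x hx y hy), Nat.cast_mul, c1]
      field_simp
    rw [Finset.sum_comm]
    simp_rw [sum_ind]
    rw [Finset.sum_product_right]
    rw [← Finset.add_sum_erase _ _ hy]
    have t1 : ∑ x' ∈ I, ((Finset.univ.filter fun C : ChordDiagram n =>
        C.1 x = y ∧ C.1 x' = y).card : ℝ) ≤ A := by
      rw [← Finset.add_sum_erase _ _ hx, Finset.sum_eq_zero, add_zero]
      · rw [← hA1]
        simp
      · intro x' hx'
        rw [mem_erase] at hx'
        rw [Nat.cast_eq_zero, Finset.card_eq_zero, Finset.filter_eq_empty_iff]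
        rintro C _ ⟨e1, e2⟩
        apply hx'.1
        rw [← C.2.1 x', e2, ← e1, C.2.1]
    have t2 : ∑ y' ∈ R.erase y, ∑ x' ∈ I, ((Finset.univ.filter fun C : ChordDiagram n =>
        C.1 x = y ∧ C.1 x' = y').card : ℝ) ≤ ((R.card : ℝ) - 1) * (I.card * (A / (2*n-3))) := by
      have : ((R.card : ℝ) - 1) = (R.erase y).card := by
        rw [card_erase_of_mem hy, Nat.cast_sub (Finset.card_pos.2 ⟨y, hy⟩)]; simp
      rw [this, ← nsmul_eq_mul]
      refine Finset.sum_le_card_nsmul _ _ _ fun y' hy' => ?_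
      rw [← nsmul_eq_mul]
      refine Finset.sum_le_card_nsmul _ _ _ fun x' hx' => ?_
      rw [mem_erase] at hy'
      by_cases hxx : x' = x
      · rw [Finset.filter_eq_empty_iff.2]
        · simp; positivity
        · rintro C _ ⟨e1, e2⟩
          apply hy'.1
          rw [← e1, ← e2, hxx]
      · rw [← hA1, ← count_two x y x' y' (hne x hx y hy) hxx (hne x' hx' y hy).symm
          (hne x hx y' hy'.2) hy'.1 (hne x' hx' y' hy'.2), Nat.cast_mul, c3]
        apply le_of_eq
        field_simp
    have t3 : ((R.card : ℝ) - 1) * (I.card * (A / (2*n-3))) ≤ A * (I.card * R.card / (2*n-1)) := by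
      have hR' : (2:ℝ) * R.card ≤ 2*n-1 := by
        rw [← c1]; exact_mod_cast hR
      have : ((R.card : ℝ) - 1) / (2*n-3) ≤ R.card / (2*n-1) := by
        rw [div_le_div_iff₀ p3 p1]; nlinarith
      calc ((R.card : ℝ) - 1) * (I.card * (A / (2*n-3)))
          = (I.card * A) * (((R.card : ℝ) - 1) / (2*n-3)) := by ring
        _ ≤ (I.card * A) * (R.card / (2*n-1)) := by gcongr
        _ = _ := by ring
    linarith
  refine (Finset.sum_le_card_nsmul _ _ _ hz).trans (le_of_eq ?_)
  rw [card_product, nsmul_eq_mul]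
  push_cast
  ring

lemma cheb {n : ℕ} (hn : 2 ≤ n) (I R : Finset (Fin (2*n))) (hd : Disjoint I R)
    (hR : 2 * R.card ≤ 2*n - 1) (τ : ℝ) (hτ0 : 0 < τ)
    (hτ : 2 * τ ≤ I.card * R.card / (2*n-1)) :
    ((Finset.univ.filter fun C : ChordDiagram n => numIR I R C < τ).card : ℝ)
      ≤ 2 / τ * Fintype.card (ChordDiagram n) := by
  set μ : ℝ := I.card * R.card / (2*n-1) with hμ
  set W : ℝ := (Fintype.card (ChordDiagram n) : ℝ) with hW
  have m1 := moment_one hn I R hd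
  have m2 := moment_two hn I R hd hR
  have e1 : I.card * R.card * (W / (2*n - 1)) = μ * W := by rw [hμ]; ring
  rw [← hW, e1] at m1 m2
  have hμ0 : 0 < μ := by linarith
  have hvar : ∑ C : ChordDiagram n, (numIR I R C - μ)^2 ≤ μ * W := by
    have : ∑ C : ChordDiagram n, (numIR I R C - μ)^2 =
        ∑ C : ChordDiagram n, (numIR I R C)^2 - 2 * μ * ∑ C : ChordDiagram n, numIR I R C
          + μ^2 * W := by
      rw [Finset.mul_sum, ← Finset.sum_sub_distrib, hW, ← Finset.card_univ]
      rw [show μ^2 * ((Finset.univ : Finset (ChordDiagram n)).card : ℝ) =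
        ∑ C : ChordDiagram n, μ^2 by simp; ring, ← Finset.sum_add_distrib]
      exact Finset.sum_congr rfl fun C _ => by ring
    rw [this, m1]
    rw [← hμ] at m2
    nlinarith
  have hlow : ((Finset.univ.filter fun C : ChordDiagram n => numIR I R C < τ).card : ℝ) * (μ/2)^2
      ≤ ∑ C : ChordDiagram n, (numIR I R C - μ)^2 := by
    calc _ = ∑ C ∈ Finset.univ.filter (fun C : ChordDiagram n => numIR I R C < τ), (μ/2)^2 := by
          simp
      _ ≤ ∑ C ∈ Finset.univ.filter (fun C : ChordDiagram n => numIR I R C < τ),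
            (numIR I R C - μ)^2 := by
          refine Finset.sum_le_sum fun C hC => ?_
          have := (mem_filter.1 hC).2
          nlinarith
      _ ≤ _ := Finset.sum_le_sum_of_subset_of_nonneg (Finset.filter_subset _ _)
          fun _ _ _ => sq_nonneg _
  set X := ((Finset.univ.filter fun C : ChordDiagram n => numIR I R C < τ).card : ℝ)
  have hW0 : 0 ≤ W := by positivity
  have h5 : X * μ ≤ 4 * W := by
    have : X * (μ/2)^2 ≤ μ * W := hlow.trans hvar
    have : μ * (X * μ) ≤ μ * (4 * W) := by nlinarith
    exact le_of_mul_le_mul_left this hμ0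
  have hX0 : 0 ≤ X := by positivity
  rw [div_mul_eq_mul_div, le_div_iff₀ hτ0]
  nlinarith

lemma card_interval {n : ℕ} (s m : ℕ) (h : s + m ≤ 2*n) :
    (Finset.univ.filter fun e : Fin (2*n) => s ≤ (e:ℕ) ∧ (e:ℕ) < s + m).card = m := by
  rw [← Finset.card_map Fin.valEmbedding]
  have : (Finset.univ.filter fun e : Fin (2*n) => s ≤ (e:ℕ) ∧ (e:ℕ) < s + m).map
      Fin.valEmbedding = Finset.Ico s (s+m) := by
    ext a
    simp only [Finset.mem_map, mem_filter, mem_univ, true_and, Fin.valEmbedding_apply, mem_Ico]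
    constructor
    · rintro ⟨e, he, rfl⟩; exact he
    · intro ha; exact ⟨⟨a, by omega⟩, ha, rfl⟩
  rw [this]; simp

lemma famF_card {n : ℕ} (C : ChordDiagram n) (m r s p : ℕ) :
    ((famF C m r s p).card : ℝ) =
      numIR (Finset.univ.filter fun e : Fin (2*n) => s ≤ (e:ℕ) ∧ (e:ℕ) < s + m)
        (Finset.univ.filter fun e : Fin (2*n) => p ≤ (e:ℕ) ∧ (e:ℕ) < p + r) C := by
  unfold numIR famF
  rw [Finset.sum_product]
  simp_rw [Finset.sum_ite_eq]
  rw [Finset.sum_boole, Finset.filter_filter]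
  simp

lemma few_bad {n m r : ℕ} (hn : 20 ≤ n) (hm : 80 ≤ m) (hr1 : 10 * r ≤ n) (hr2 : n ≤ 20 * r)
    (s p : ℕ) (hs : s + m ≤ 2*n) (hp : p + r ≤ 2*n) (hd : s + m ≤ p ∨ p + r ≤ s) :
    ((Finset.univ.filter fun C : ChordDiagram n => (famF C m r s p).card < m / 80).card : ℝ)
      ≤ 160 / m * Fintype.card (ChordDiagram n) := by
  have hm0 : (80:ℝ) ≤ m := by exact_mod_cast hm
  have hn0 : (20:ℝ) ≤ n := by exact_mod_cast hn
  have hr2' : (n:ℝ) ≤ 20 * r := by exact_mod_cast hr2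
  have := cheb (by omega)
    (Finset.univ.filter fun e : Fin (2*n) => s ≤ (e:ℕ) ∧ (e:ℕ) < s + m)
    (Finset.univ.filter fun e : Fin (2*n) => p ≤ (e:ℕ) ∧ (e:ℕ) < p + r)
    (by
      rw [Finset.disjoint_left]
      intro a ha hb
      simp only [mem_filter, mem_univ, true_and] at ha hb
      omega) (by rw [card_interval p r hp]; omega) ((m:ℝ)/80) (by positivity) (by
      rw [card_interval p r hp, card_interval s m hs, le_div_iff₀ (by linarith)]
      nlinarith)
  rw [show (2:ℝ) / (m/80) = 160 / m by field_simp; norm_num] at this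
  refine le_trans ?_ this
  norm_cast
  refine Finset.card_le_card fun C hC => ?_
  simp only [mem_filter, mem_univ, true_and] at hC ⊢
  rw [← famF_card]
  have h1 : ((famF C m r s p).card : ℝ) < ((m/80 : ℕ) : ℝ) := by exact_mod_cast hC
  exact h1.trans_le (by exact_mod_cast Nat.cast_div_le)

/-! ### Assembly -/

instance chord_nonempty (n : ℕ) : Nonempty (ChordDiagram n) :=
  ⟨⟨Fin.rev, fun i => Fin.rev_rev i, fun i h => by
    have := congrArg Fin.val h
    rw [Fin.val_rev] at this
    omega⟩⟩

/-- admissible pairs of (block, region) indices. -/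
noncomputable def adm (n m r : ℕ) : Finset (ℕ × ℕ) :=
  (Finset.range (2*n/m) ×ˢ Finset.range 40).filter fun z =>
    z.1 * m + m ≤ 2*n ∧ z.2 * r + r ≤ 2*n ∧ (z.1 * m + m ≤ z.2 * r ∨ z.2 * r + r ≤ z.1 * m)

/-- failure event for the orientation. -/
def BadO {n : ℕ} (m r T : ℕ) (z : ℕ × ℕ) (a b : Fin (2*n)) (D : OrientedChordDiagram n) : Prop :=
  T ≤ (famF D.1 m r (z.1*m) (z.2*r)).card ∧ b ≠ a ∧ b ≠ D.1.1 a ∧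
    (∀ e ∈ famF D.1 m r (z.1*m) (z.2*r), Crosses D.1 a e ∧ Crosses D.1 b e) ∧
    ¬ ∃ e ∈ famF D.1 m r (z.1*m) (z.2*r), OverD D a e ∧ OverD D e b

lemma adm_mem {n m r : ℕ} (hm : 1 ≤ m) (hn : 1 ≤ n) (hr2 : n ≤ 20 * r) (t j : ℕ)
    (h1 : t * m + m ≤ 2*n) (h2 : j * r + r ≤ 2*n)
    (h3 : t * m + m ≤ j * r ∨ j * r + r ≤ t * m) : (t, j) ∈ adm n m r := by
  unfold adm
  rw [mem_filter, mem_product, mem_range, mem_range]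
  refine ⟨⟨?_, ?_⟩, h1, h2, h3⟩
  · show t < 2*n/m
    rw [Nat.lt_iff_add_one_le, Nat.le_div_iff_mul_le hm]
    linarith
  · show j < 40
    by_contra hj
    push Not at hj
    have := Nat.mul_le_mul_right r hj
    omega

lemma not_hyp {n m r T : ℕ} (hm : 1 ≤ m) (hn : 1 ≤ n) (hr2 : n ≤ 20 * r) (hT : 1 ≤ T)
    (D : OrientedChordDiagram n) (h : ¬ HypO D m r) :
    (∃ z ∈ adm n m r, (famF D.1 m r (z.1*m) (z.2*r)).card < T) ∨
    ∃ z ∈ adm n m r, ∃ a b, BadO m r T z a b D := by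
  by_contra hc
  push Not at hc
  obtain ⟨hc1, hc2⟩ := hc
  apply h
  rintro s p ⟨t, rfl⟩ ⟨j, rfl⟩ h1 h2 h3
  rw [mul_comm m t] at *
  rw [mul_comm r j] at *
  have hz := adm_mem hm hn hr2 t j h1 h2 h3
  have hcard := hc1 _ hz
  simp only at hcard
  refine ⟨Finset.card_pos.1 (by omega), ?_⟩
  intro a b hab hab' hcr
  by_contra hno
  exact hc2 _ hz a b ⟨hcard, hab, hab', hcr, hno⟩

lemma card_prod_filter {α β : Type*} [Fintype α] [Fintype β] (P : α × β → Prop) :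
    (Finset.univ.filter P).card =
      ∑ a : α, (Finset.univ.filter fun b : β => P (a, b)).card := by
  simp_rw [Finset.card_filter]
  rw [Fintype.sum_prod_type]

lemma badC_card {n m r : ℕ} (hn : 20 ≤ n) (hm : 80 ≤ m) (hr1 : 10 * r ≤ n) (hr2 : n ≤ 20 * r)
    (z : ℕ × ℕ) (hz : z ∈ adm n m r) :
    ((Finset.univ.filter fun D : OrientedChordDiagram n =>
      (famF D.1 m r (z.1*m) (z.2*r)).card < m/80).card : ℝ) ≤
      160 / m * Fintype.card (OrientedChordDiagram n) := by
  unfold adm at hz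
  rw [mem_filter] at hz
  obtain ⟨-, h1, h2, h3⟩ := hz
  have key := few_bad hn hm hr1 hr2 _ _ h1 h2 h3
  have : (Finset.univ.filter fun D : OrientedChordDiagram n =>
      (famF D.1 m r (z.1*m) (z.2*r)).card < m/80) =
      (Finset.univ.filter fun C : ChordDiagram n =>
      (famF C m r (z.1*m) (z.2*r)).card < m/80) ×ˢ Finset.univ := by
    ext ⟨C, β⟩
    simp
  rw [this, card_product, Fintype.card_prod, Nat.cast_mul, Nat.cast_mul, ← mul_assoc, card_univ]
  gcongr

lemma badO_card {n m r T : ℕ} (z : ℕ × ℕ) (hz : z ∈ adm n m r) (a b : Fin (2*n)) :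
    ((Finset.univ.filter fun D : OrientedChordDiagram n => BadO m r T z a b D).card : ℝ) ≤
      (3/4:ℝ)^T * Fintype.card (OrientedChordDiagram n) := by
  unfold adm at hz
  rw [mem_filter] at hz
  obtain ⟨-, h1, h2, h3⟩ := hz
  rw [card_prod_filter, Fintype.card_prod, Nat.cast_sum]
  have : ∀ C ∈ (Finset.univ : Finset (ChordDiagram n)),
      ((Finset.univ.filter fun β : Fin (2*n) → Fin (2*n) → Bool =>
      BadO m r T z a b (C, β)).card : ℝ) ≤
      (3/4:ℝ)^T * Fintype.card (Fin (2*n) → Fin (2*n) → Bool) := by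
    intro C _
    by_cases hg : T ≤ (famF C m r (z.1*m) (z.2*r)).card ∧ b ≠ a ∧ b ≠ C.1 a ∧
      (∀ e ∈ famF C m r (z.1*m) (z.2*r), Crosses C a e ∧ Crosses C b e)
    · obtain ⟨g1, g2, g3, g4⟩ := hg
      have key := orient_count C m r _ _ h3 a b g2 g3 g4
      set N := (famF C m r (z.1*m) (z.2*r)).card
      set B := Fintype.card (Fin (2*n) → Fin (2*n) → Bool)
      have hle : (Finset.univ.filter fun β : Fin (2*n) → Fin (2*n) → Bool =>
          BadO m r T z a b (C, β)).card ≤ (Finset.univ.filter fun β : Fin (2*n) → Fin (2*n) → Bool =>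
          ¬ ∃ e ∈ famF C m r (z.1*m) (z.2*r), OverD (C, β) a e ∧ OverD (C, β) e b).card := by
        refine Finset.card_le_card fun β hβ => ?_
        rw [mem_filter] at hβ ⊢
        exact ⟨mem_univ _, hβ.2.2.2.2.2⟩
      refine (Nat.cast_le.2 hle).trans ?_
      set X := (Finset.univ.filter fun β : Fin (2*n) → Fin (2*n) → Bool =>
          ¬ ∃ e ∈ famF C m r (z.1*m) (z.2*r), OverD (C, β) a e ∧ OverD (C, β) e b).card
      have key' : (4:ℝ)^N * X ≤ 3^N * B := by exact_mod_cast key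
      have hX : (X:ℝ) ≤ (3/4:ℝ)^N * B := by
        rw [div_pow, div_mul_eq_mul_div, le_div_iff₀ (by positivity)]
        linarith
      refine hX.trans ?_
      gcongr ?_ * _
      exact pow_le_pow_of_le_one (by norm_num) (by norm_num) g1
    · rw [Finset.filter_eq_empty_iff.2]
      · simp only [card_empty, Nat.cast_zero]
        positivity
      · intro β _ hb
        exact hg ⟨hb.1, hb.2.1, hb.2.2.1, hb.2.2.2.1⟩
  refine (Finset.sum_le_card_nsmul _ _ _ this).trans (le_of_eq ?_)
  rw [nsmul_eq_mul, card_univ]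
  push_cast
  ring

lemma adm_card (n m r : ℕ) : (adm n m r).card ≤ 2*n/m * 40 := by
  unfold adm
  refine (Finset.card_filter_le _ _).trans ?_
  rw [card_product, card_range, card_range]

lemma fail_bound {n m r k : ℕ} (hn : 20 ≤ n) (hm : 80 ≤ m) (hr1 : 10 * r ≤ n) (hr2 : n ≤ 20 * r)
    (hmk : 4 * m ≤ k) (hkr : k ≤ r) :
    1 - (12800 * n / (m:ℝ)^2 + 320 * (n:ℝ)^3 * (3/4:ℝ)^(m/80)) ≤
      probD n (fun D => StronglyConnectedIn D {x | k ≤ chordLength D.1 x}) := by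
  have hn0 : (20:ℝ) ≤ n := by exact_mod_cast hn
  have hm0 : (80:ℝ) ≤ m := by exact_mod_cast hm
  unfold probD
  set E := Finset.univ.filter fun D : OrientedChordDiagram n =>
    StronglyConnectedIn D {x | k ≤ chordLength D.1 x} with hE
  have hsub : (Finset.univ : Finset (OrientedChordDiagram n)) ⊆ E ∪
      ((adm n m r).biUnion fun z => Finset.univ.filter fun D : OrientedChordDiagram n =>
        (famF D.1 m r (z.1*m) (z.2*r)).card < m/80) ∪
      ((adm n m r ×ˢ (Finset.univ : Finset (Fin (2*n) × Fin (2*n)))).biUnion fun w =>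
        Finset.univ.filter fun D : OrientedChordDiagram n => BadO m r (m/80) w.1 w.2.1 w.2.2 D) := by
    intro D _
    by_cases hH : HypO D m r
    · refine mem_union_left _ (mem_union_left _ ?_)
      rw [hE, mem_filter]
      exact ⟨mem_univ _, det_main D hH (by omega) hmk hkr hr1⟩
    · rcases not_hyp (T := m/80) (by omega) (by omega) hr2 (by omega) D hH with
        ⟨z, hz, h⟩ | ⟨z, hz, a, b, h⟩
      · refine mem_union_left _ (mem_union_right _ ?_)
        rw [mem_biUnion]
        exact ⟨z, hz, mem_filter.2 ⟨mem_univ _, h⟩⟩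
      · refine mem_union_right _ ?_
        rw [mem_biUnion]
        exact ⟨(z, (a, b)), mem_product.2 ⟨hz, mem_univ _⟩, mem_filter.2 ⟨mem_univ _, h⟩⟩
  have hcard := (Finset.card_le_card hsub).trans
    ((Finset.card_union_le _ _).trans (Nat.add_le_add_right (Finset.card_union_le _ _) _))
  have hcardR := (Nat.cast_le (α := ℝ)).2 hcard
  push_cast at hcardR
  set W : ℝ := (Fintype.card (OrientedChordDiagram n) : ℝ) with hW
  have hW0 : 0 < W := by rw [hW]; exact_mod_cast Fintype.card_pos
  have hA : ((adm n m r).card : ℝ) ≤ 80 * n / m := by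
    refine (Nat.cast_le.2 (adm_card n m r)).trans ?_
    push_cast
    have : ((2*n/m : ℕ) : ℝ) ≤ ((2*n : ℕ) : ℝ) / m := Nat.cast_div_le
    push_cast at this
    calc ((2*n/m : ℕ) : ℝ) * 40 ≤ 2*n/m*40 := by gcongr
      _ = _ := by ring
  have hB1 : ((((adm n m r).biUnion fun z => Finset.univ.filter fun D : OrientedChordDiagram n =>
        (famF D.1 m r (z.1*m) (z.2*r)).card < m/80).card : ℕ) : ℝ) ≤
        12800 * n / (m:ℝ)^2 * W := by
    refine (Nat.cast_le.2 Finset.card_biUnion_le).trans ?_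
    rw [Nat.cast_sum]
    refine (Finset.sum_le_card_nsmul _ _ _ fun z hz => badC_card hn hm hr1 hr2 z hz).trans ?_
    rw [nsmul_eq_mul]
    calc _ ≤ 80 * n / m * (160 / m * W) := by gcongr
      _ = _ := by field_simp; norm_num
  have hB2 : ((((adm n m r ×ˢ (Finset.univ : Finset (Fin (2*n) × Fin (2*n)))).biUnion fun w =>
        Finset.univ.filter fun D : OrientedChordDiagram n =>
          BadO m r (m/80) w.1 w.2.1 w.2.2 D).card : ℕ) : ℝ) ≤
        320 * (n:ℝ)^3 * (3/4:ℝ)^(m/80) * W := by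
    refine (Nat.cast_le.2 Finset.card_biUnion_le).trans ?_
    rw [Nat.cast_sum]
    refine (Finset.sum_le_card_nsmul _ _ _ fun w hw =>
      badO_card w.1 (mem_product.1 hw).1 w.2.1 w.2.2).trans ?_
    rw [nsmul_eq_mul, card_product, card_univ, Fintype.card_prod, Fintype.card_fin]
    push_cast
    have hA' : ((adm n m r).card : ℝ) ≤ 80 * n := by
      refine hA.trans (div_le_self (by positivity) (by linarith))
    calc _ ≤ 80 * n * (2*n*(2*n)) * ((3/4:ℝ)^(m/80) * W) := by gcongr
      _ = _ := by ring
  rw [Finset.card_univ, ← hW, le_div_iff₀ hW0]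
  rw [Finset.card_univ, ← hW] at hcardR
  linarith

lemma probD_le_one (n : ℕ) (E : OrientedChordDiagram n → Prop) : probD n E ≤ 1 := by
  unfold probD
  apply div_le_one_of_le₀ _ (by positivity)
  exact_mod_cast Finset.card_filter_le _ _

lemma asympt_T :
    ∀ᶠ n : ℕ in Filter.atTop,
      (n:ℝ)^((11:ℝ)/20) ≤ ((⌊(n:ℝ) ^ ((3:ℝ)/5)⌋₊ / 4 / 80 : ℕ) : ℝ) := by
  have h1 : Tendsto (fun n : ℕ => (n:ℝ)^((11:ℝ)/20)) atTop atTop :=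
    (tendsto_rpow_atTop (by norm_num)).comp tendsto_natCast_atTop_atTop
  have h2 : Tendsto (fun n : ℕ => (n:ℝ)^((1:ℝ)/20)) atTop atTop :=
    (tendsto_rpow_atTop (by norm_num)).comp tendsto_natCast_atTop_atTop
  filter_upwards [h1.eventually_ge_atTop 1000, h2.eventually_ge_atTop 1000,
    eventually_ge_atTop 1] with n a1 a2 hn
  have hn0 : (0:ℝ) < n := by exact_mod_cast hn
  have e : (n:ℝ)^((3:ℝ)/5) = (n:ℝ)^((11:ℝ)/20) * (n:ℝ)^((1:ℝ)/20) := by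
    rw [← Real.rpow_add hn0]; norm_num
  set k := ⌊(n:ℝ) ^ ((3:ℝ)/5)⌋₊ with hk
  have hk1 : (n:ℝ)^((3:ℝ)/5) < k + 1 := Nat.lt_floor_add_one _
  have hd : k ≤ 320 * (k/4/80) + 320 := by omega
  have hd' : (k:ℝ) ≤ 320 * ((k/4/80 : ℕ):ℝ) + 320 := by exact_mod_cast hd
  nlinarith

theorem stmt10 :
    Filter.Tendsto
      (fun n : ℕ => probD n (fun D =>
        StronglyConnectedIn D {x | ⌊(n:ℝ) ^ ((3:ℝ)/5)⌋₊ ≤ chordLength D.1 x}))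
      Filter.atTop (nhds 1) := by
  have hT := asympt_T
  set T : ℕ → ℕ := fun n => ⌊(n:ℝ) ^ ((3:ℝ)/5)⌋₊ / 4 / 80 with hTdef
  have h11 : Tendsto (fun n : ℕ => (n:ℝ)^((11:ℝ)/20)) atTop atTop :=
    (tendsto_rpow_atTop (by norm_num)).comp tendsto_natCast_atTop_atTop
  have hTt : Tendsto T atTop atTop := by
    rw [← tendsto_natCast_atTop_iff (R := ℝ)]
    exact tendsto_atTop_mono' _ hT h11
  have hinv : Tendsto (fun n : ℕ => (n:ℝ)^(-((1:ℝ)/10))) atTop (nhds 0) :=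
    (tendsto_rpow_neg_atTop (by norm_num)).comp tendsto_natCast_atTop_atTop
  have hpow : Tendsto (fun n : ℕ => ((T n : ℕ) : ℝ)^6 * (3/4:ℝ)^(T n)) atTop (nhds 0) :=
    (tendsto_pow_const_mul_const_pow_of_abs_lt_one 6
      (by rw [abs_of_pos] <;> norm_num)).comp hTt
  have hlim : Tendsto (fun n : ℕ => 1 - (12800 * (n:ℝ)^(-((1:ℝ)/10)) +
      320 * (((T n : ℕ) : ℝ)^6 * (3/4:ℝ)^(T n)))) atTop (nhds 1) := by
    have := ((hinv.const_mul 12800).add (hpow.const_mul 320)).const_sub 1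
    simpa using this
  have hk20 : ∀ᶠ n : ℕ in atTop, 20 ≤ (n:ℝ)^((2:ℝ)/5) :=
    ((tendsto_rpow_atTop (by norm_num)).comp tendsto_natCast_atTop_atTop).eventually_ge_atTop 20
  refine tendsto_of_tendsto_of_tendsto_of_le_of_le' hlim tendsto_const_nhds ?_
    (Eventually.of_forall fun n => probD_le_one n _)
  filter_upwards [hT, hTt.eventually_ge_atTop 1, hk20, eventually_ge_atTop 20]
    with n h1 h2 h3 hn
  have hn0 : (0:ℝ) < n := by exact_mod_cast (by omega : 0 < n)
  have hn1 : (1:ℝ) ≤ n := by exact_mod_cast (by omega : 1 ≤ n)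
  set k := ⌊(n:ℝ) ^ ((3:ℝ)/5)⌋₊ with hk
  have hT' : T n = k / 4 / 80 := rfl
  have hkr : k ≤ n / 10 := by
    have hk1 : (k:ℝ) ≤ (n:ℝ)^((3:ℝ)/5) := Nat.floor_le (by positivity)
    have e : (n:ℝ)^((3:ℝ)/5) * (n:ℝ)^((2:ℝ)/5) = n := by
      rw [← Real.rpow_add hn0]; norm_num
    have : (k:ℝ) * 20 ≤ n := by
      have h0 : (0:ℝ) ≤ k := by positivity
      nlinarith
    have : k * 20 ≤ n := by exact_mod_cast this
    omega
  have hb := fail_bound (n := n) (m := k/4) (r := n/10) (k := k) hn (by omega) (by omega)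
    (by omega) (by omega) hkr
  refine le_trans ?_ hb
  rw [← hT'] at h1 ⊢
  have e11 : ((n:ℝ)^((11:ℝ)/20))^2 = n * (n:ℝ)^((1:ℝ)/10) := by
    rw [← Real.rpow_natCast, ← Real.rpow_mul hn0.le]
    nth_rewrite 2 [← Real.rpow_one (n:ℝ)]
    rw [← Real.rpow_add hn0]; norm_num
  have h10 : (1:ℝ) ≤ (n:ℝ)^((1:ℝ)/10) := Real.one_le_rpow hn1 (by norm_num)
  have hsq : n * (n:ℝ)^((1:ℝ)/10) ≤ ((T n : ℕ) : ℝ)^2 := by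
    rw [← e11]
    exact pow_le_pow_left₀ (by positivity) h1 2
  have hTm : ((T n : ℕ) : ℝ) ≤ ((k/4 : ℕ) : ℝ) := by
    rw [hT']; exact_mod_cast Nat.div_le_self _ _
  have t1 : 12800 * (n:ℝ) / ((k/4 : ℕ) : ℝ)^2 ≤ 12800 * (n:ℝ)^(-((1:ℝ)/10)) := by
    have hpos : 0 < n * (n:ℝ)^((1:ℝ)/10) := by positivity
    have : n * (n:ℝ)^((1:ℝ)/10) ≤ ((k/4 : ℕ) : ℝ)^2 :=
      hsq.trans (pow_le_pow_left₀ (by positivity) hTm 2)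
    calc 12800 * (n:ℝ) / ((k/4 : ℕ) : ℝ)^2 ≤ 12800 * (n:ℝ) / (n * (n:ℝ)^((1:ℝ)/10)) := by gcongr
      _ = _ := by rw [Real.rpow_neg hn0.le]; field_simp
  have t2 : 320 * (n:ℝ)^3 * (3/4:ℝ)^(T n) ≤ 320 * (((T n : ℕ) : ℝ)^6 * (3/4:ℝ)^(T n)) := by
    have : (n:ℝ) ≤ ((T n : ℕ) : ℝ)^2 := le_trans (by nlinarith) hsq
    have h3' : (n:ℝ)^3 ≤ ((T n : ℕ) : ℝ)^6 := by
      calc (n:ℝ)^3 ≤ (((T n : ℕ) : ℝ)^2)^3 := pow_le_pow_left₀ hn0.le this 3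
        _ = _ := by ring
    rw [mul_assoc]
    gcongr
  linarith
end

section
/- With high probability, as n→∞, the uniformly random chord diagram C_n contains no block of 3⌊n^{3/5}⌋ consecutive endpoints (taken cyclically modulo 2n) that contains at least ⌊n^{1/3}⌋ chords, i.e., at least ⌊n^{1/3}⌋ chords with both endpoints in the block. -/
open scoped Classical
open Finset Filter

lemma cd_step {n : ℕ} (B S : Finset (Fin (2*n))) (x : Fin (2*n)) (hx : x ∉ S)
    (hn : 2 * S.card + 1 ≤ n) :
    n * ((Finset.univ : Finset (ChordDiagram n)).filter
      (fun C => ∀ z ∈ insert x S, z < C.1 z ∧ C.1 z ∈ B)).card ≤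
    B.card * ((Finset.univ : Finset (ChordDiagram n)).filter
      (fun C => ∀ z ∈ S, z < C.1 z ∧ C.1 z ∈ B)).card := by
  set A := (Finset.univ : Finset (ChordDiagram n)).filter
      (fun C => ∀ z ∈ insert x S, z < C.1 z ∧ C.1 z ∈ B) with hA
  set T := (Finset.univ : Finset (ChordDiagram n)).filter
      (fun C => ∀ z ∈ S, z < C.1 z ∧ C.1 z ∈ B) with hT
  let U : ChordDiagram n → Finset (Fin (2*n)) :=
    fun C => Finset.univ \ (insert x (S ∪ S.image C.1))
  have hU : ∀ C, n ≤ (U C).card := by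
    intro C
    have h1 : (insert x (S ∪ S.image C.1)).card ≤ 2 * S.card + 1 := by
      have h2 := Finset.card_insert_le x (S ∪ S.image C.1)
      have h3 := Finset.card_union_le S (S.image C.1)
      have h4 : (S.image C.1).card ≤ S.card := Finset.card_image_le
      omega
    have h5 := Finset.le_card_sdiff (insert x (S ∪ S.image C.1)) (Finset.univ : Finset (Fin (2*n)))
    have h6 : (Finset.univ : Finset (Fin (2*n))).card = 2 * n := by simp
    show n ≤ (Finset.univ \ (insert x (S ∪ S.image C.1))).card
    omega
  let conj : ChordDiagram n → Equiv.Perm (Fin (2*n)) → ChordDiagram n := fun C σ =>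
    ⟨fun i => σ (C.1 (σ.symm i)), by
      constructor
      · intro i; simp [C.2.1]
      · intro i h
        have h' : C.1 (σ.symm i) = σ.symm i := by
          rw [Equiv.eq_symm_apply]; exact h
        exact C.2.2 _ h'⟩
  have key : (A.sigma U).card ≤ (T ×ˢ B).card := by
    apply Finset.card_le_card_of_injOn
      (fun p => (conj p.1 (Equiv.swap (p.1.1 x) p.2), p.1.1 x))
    · rintro ⟨C, y⟩ hp
      simp only [Finset.coe_sigma, Set.mem_sigma_iff, Finset.mem_coe] at hp
      obtain ⟨hC, hy⟩ := hp
      simp only [hA, Finset.mem_filter, Finset.mem_univ, true_and, Finset.mem_insert,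
        forall_eq_or_imp] at hC
      obtain ⟨⟨hx1, hx2⟩, hC⟩ := hC
      simp only [U, Finset.mem_sdiff, Finset.mem_univ, true_and, Finset.mem_insert,
        Finset.mem_union, Finset.mem_image, not_or, not_exists, not_and] at hy
      obtain ⟨hy1, hy2, hy3⟩ := hy
      simp only [Finset.coe_product, Set.mem_prod, Finset.mem_coe]
      refine ⟨?_, hx2⟩
      simp only [hT, Finset.mem_filter, Finset.mem_univ, true_and]
      intro z hz
      have e : (conj C (Equiv.swap (C.1 x) y)).1 z = C.1 z := by
        show (Equiv.swap (C.1 x) y) (C.1 ((Equiv.swap (C.1 x) y).symm z)) = C.1 z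
        have hz1 : z ≠ C.1 x := by
          intro h
          have := (hC z hz).1
          rw [h, C.2.1] at this
          exact absurd hx1 (not_lt.mpr this.le)
        have hz2 : z ≠ y := by rintro rfl; exact hy2 hz
        rw [Equiv.symm_swap, Equiv.swap_apply_of_ne_of_ne hz1 hz2]
        apply Equiv.swap_apply_of_ne_of_ne
        · intro h
          have : z = x := by rw [← C.2.1 z, h, C.2.1]
          exact hx (this ▸ hz)
        · exact hy3 z hz
      rw [e]
      exact hC z hz
    · rintro ⟨C, y⟩ hp ⟨C', y'⟩ hp' h
      simp only [Finset.coe_sigma, Set.mem_sigma_iff, Finset.mem_coe] at hp hp'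
      have hy : y ≠ x := by
        have := hp.2
        simp only [U, Finset.mem_sdiff, Finset.mem_insert, not_or] at this
        exact this.2.1
      have hy' : y' ≠ x := by
        have := hp'.2
        simp only [U, Finset.mem_sdiff, Finset.mem_insert, not_or] at this
        exact this.2.1
      simp only [Prod.mk.injEq] at h
      obtain ⟨h1, h2⟩ := h
      have hc : ∀ i, (Equiv.swap (C.1 x) y) (C.1 ((Equiv.swap (C.1 x) y).symm i)) =
          (Equiv.swap (C'.1 x) y') (C'.1 ((Equiv.swap (C'.1 x) y').symm i)) := by
        intro i
        exact congrFun (congrArg Subtype.val h1) i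
      have hyy : y = y' := by
        have := hc x
        rw [Equiv.symm_swap, Equiv.symm_swap,
          Equiv.swap_apply_of_ne_of_ne (C.2.2 x).symm hy.symm,
          Equiv.swap_apply_of_ne_of_ne (C'.2.2 x).symm hy'.symm,
          Equiv.swap_apply_left, Equiv.swap_apply_left] at this
        exact this
      subst hyy
      have : C = C' := by
        apply Subtype.ext
        funext i
        have := hc ((Equiv.swap (C.1 x) y) i)
        rw [← h2, Equiv.symm_apply_apply] at this
        exact (Equiv.swap (C.1 x) y).injective this
      subst this
      rfl
  rw [Finset.card_sigma, Finset.card_product] at key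
  calc n * A.card = ∑ _C ∈ A, n := by simp [mul_comm]
    _ ≤ ∑ C ∈ A, (U C).card := Finset.sum_le_sum (fun C _ => hU C)
    _ ≤ _ := by rw [mul_comm B.card]; exact key

lemma cd_pow {n : ℕ} (B S : Finset (Fin (2*n))) (hn : 2 * S.card ≤ n) :
    n ^ S.card * ((Finset.univ : Finset (ChordDiagram n)).filter
      (fun C => ∀ z ∈ S, z < C.1 z ∧ C.1 z ∈ B)).card ≤
    B.card ^ S.card * (Finset.univ : Finset (ChordDiagram n)).card := by
  induction S using Finset.induction_on with
  | empty => simp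
  | insert x S hx ih =>
    rw [Finset.card_insert_of_notMem hx] at hn ⊢
    have h1 := cd_step B S x hx (by omega)
    have h2 := ih (by omega)
    calc _ = n ^ S.card * (n * ((Finset.univ : Finset (ChordDiagram n)).filter
      (fun C => ∀ z ∈ insert x S, z < C.1 z ∧ C.1 z ∈ B)).card) := by ring
      _ ≤ n ^ S.card * (B.card * ((Finset.univ : Finset (ChordDiagram n)).filter
      (fun C => ∀ z ∈ S, z < C.1 z ∧ C.1 z ∈ B)).card) := Nat.mul_le_mul_left _ h1
      _ = B.card * (n ^ S.card * ((Finset.univ : Finset (ChordDiagram n)).filter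
      (fun C => ∀ z ∈ S, z < C.1 z ∧ C.1 z ∈ B)).card) := by ring
      _ ≤ B.card * (B.card ^ S.card * (Finset.univ : Finset (ChordDiagram n)).card) :=
        Nat.mul_le_mul_left _ h2
      _ = _ := by ring

lemma cd_block {n : ℕ} (i t k : ℕ) (hn : 2 * k ≤ n) :
    n ^ k * ((Finset.univ : Finset (ChordDiagram n)).filter
      (fun C => k ≤ chordsInBlock n C i t)).card ≤
    t.choose k * t ^ k * (Finset.univ : Finset (ChordDiagram n)).card := by
  set B : Finset (Fin (2*n)) := Finset.univ.filter
    (fun x => ∃ a < t, (x:ℕ) = (i + a) % (2*n)) with hB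
  have hBt : B.card ≤ t := by
    have : (B.image Fin.val).card ≤ ((Finset.range t).image (fun a => (i + a) % (2*n))).card := by
      apply Finset.card_le_card
      intro y hy
      simp only [hB, Finset.mem_image, Finset.mem_filter, Finset.mem_univ, true_and] at hy
      obtain ⟨x, ⟨a, ha, hxa⟩, rfl⟩ := hy
      simp only [Finset.mem_image, Finset.mem_range]
      exact ⟨a, ha, hxa.symm⟩
    rw [Finset.card_image_of_injective _ Fin.val_injective] at this
    exact this.trans (Finset.card_image_le.trans (by simp))
  have hsub : (Finset.univ : Finset (ChordDiagram n)).filter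
      (fun C => k ≤ chordsInBlock n C i t) ⊆
      (Finset.powersetCard k B).biUnion (fun S => (Finset.univ : Finset (ChordDiagram n)).filter
      (fun C => ∀ z ∈ S, z < C.1 z ∧ C.1 z ∈ B)) := by
    intro C hC
    replace hC := (Finset.mem_filter.mp hC).2
    unfold chordsInBlock at hC
    obtain ⟨S, hS, hSk⟩ := Finset.exists_subset_card_eq hC
    simp only [Finset.mem_biUnion, Finset.mem_powersetCard, Finset.mem_filter, Finset.mem_univ,
      true_and]
    refine ⟨S, ⟨?_, hSk⟩, ?_⟩
    · intro z hz
      have := hS hz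
      simp only [Finset.mem_filter, Finset.mem_univ, true_and] at this
      simp only [hB, Finset.mem_filter, Finset.mem_univ, true_and]
      exact this.2.1
    · intro z hz
      have := hS hz
      simp only [Finset.mem_filter, Finset.mem_univ, true_and] at this
      simp only [hB, Finset.mem_filter, Finset.mem_univ, true_and]
      exact ⟨this.1, this.2.2⟩
  calc _ ≤ n ^ k * ∑ S ∈ Finset.powersetCard k B, ((Finset.univ : Finset (ChordDiagram n)).filter
      (fun C => ∀ z ∈ S, z < C.1 z ∧ C.1 z ∈ B)).card :=
        Nat.mul_le_mul_left _ ((Finset.card_le_card hsub).trans Finset.card_biUnion_le)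
    _ = ∑ S ∈ Finset.powersetCard k B, n ^ k * ((Finset.univ : Finset (ChordDiagram n)).filter
      (fun C => ∀ z ∈ S, z < C.1 z ∧ C.1 z ∈ B)).card := by rw [Finset.mul_sum]
    _ ≤ ∑ S ∈ Finset.powersetCard k B, t ^ k * (Finset.univ : Finset (ChordDiagram n)).card := by
        apply Finset.sum_le_sum
        intro S hS
        have hk := (Finset.mem_powersetCard.mp hS).2
        have := cd_pow B S (by omega)
        rw [hk] at this
        exact this.trans (Nat.mul_le_mul_right _ (Nat.pow_le_pow_left hBt k))
    _ = B.card.choose k * (t ^ k * (Finset.univ : Finset (ChordDiagram n)).card) := by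
        rw [Finset.sum_const, Finset.card_powersetCard, smul_eq_mul]
    _ ≤ t.choose k * (t ^ k * (Finset.univ : Finset (ChordDiagram n)).card) :=
        Nat.mul_le_mul_right _ (Nat.choose_le_choose k hBt)
    _ = _ := by ring

lemma cd_nonempty (n : ℕ) : 0 < (Finset.univ : Finset (ChordDiagram n)).card := by
  rw [Finset.card_pos]
  refine ⟨⟨Fin.rev, fun i => Fin.rev_rev i, fun i h => ?_⟩, Finset.mem_univ _⟩
  have := congrArg Fin.val h
  rw [Fin.val_rev] at this
  have := i.2
  omega

lemma cd_bad {n : ℕ} (t k : ℕ) (hn : 2 * k ≤ n) (hn0 : 0 < n) :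
    1 - 2 * n * (((t:ℝ) ^ 2 / n) ^ k / k.factorial) ≤
      prob n (fun C => ¬ ∃ i < 2*n, k ≤ chordsInBlock n C i t) := by
  set N := (Finset.univ : Finset (ChordDiagram n)).card with hN
  have hNpos : (0:ℝ) < N := by exact_mod_cast cd_nonempty n
  set bad := (Finset.univ : Finset (ChordDiagram n)).filter
    (fun C => ∃ i < 2*n, k ≤ chordsInBlock n C i t) with hbad
  have h1 : bad.card + ((Finset.univ : Finset (ChordDiagram n)).filter
    (fun C => ¬ ∃ i < 2*n, k ≤ chordsInBlock n C i t)).card = N :=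
    Finset.card_filter_add_card_filter_not _
  have h2 : bad.card ≤ ∑ i ∈ Finset.range (2*n), ((Finset.univ : Finset (ChordDiagram n)).filter
      (fun C => k ≤ chordsInBlock n C i t)).card := by
    refine (Finset.card_le_card ?_).trans Finset.card_biUnion_le
    intro C hC
    simp only [hbad, Finset.mem_filter, Finset.mem_univ, true_and] at hC
    simpa using hC
  have hnp : (0:ℝ) < n := by exact_mod_cast hn0
  have h3 : ∀ i, (((Finset.univ : Finset (ChordDiagram n)).filter
      (fun C => k ≤ chordsInBlock n C i t)).card : ℝ) ≤
      ((t:ℝ) ^ 2 / n) ^ k / k.factorial * N := by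
    intro i
    have h4 := cd_block (n := n) i t k hn
    have h5 : ((n:ℝ) ^ k * (((Finset.univ : Finset (ChordDiagram n)).filter
      (fun C => k ≤ chordsInBlock n C i t)).card : ℝ)) ≤ (t.choose k : ℝ) * t ^ k * N := by
      exact_mod_cast h4
    have h6 : (t.choose k : ℝ) ≤ (t:ℝ) ^ k / k.factorial := Nat.choose_le_pow_div k t
    have h7 : (t.choose k : ℝ) * t ^ k * N ≤ (t:ℝ) ^ k / k.factorial * t ^ k * N := by gcongr
    have h8 : (n:ℝ) ^ k * (((t:ℝ) ^ 2 / n) ^ k / k.factorial * N) =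
        (t:ℝ) ^ k / k.factorial * t ^ k * N := by
      rw [div_pow]
      field_simp
      ring
    refine le_of_mul_le_mul_left ?_ (pow_pos hnp k)
    rw [h8]
    exact h5.trans h7
  have h9 : (bad.card : ℝ) ≤ 2 * n * (((t:ℝ) ^ 2 / n) ^ k / k.factorial) * N := by
    calc (bad.card : ℝ) ≤ ∑ i ∈ Finset.range (2*n),
          (((Finset.univ : Finset (ChordDiagram n)).filter
      (fun C => k ≤ chordsInBlock n C i t)).card : ℝ) := by exact_mod_cast h2
      _ ≤ ∑ i ∈ Finset.range (2*n), ((t:ℝ) ^ 2 / n) ^ k / k.factorial * N :=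
        Finset.sum_le_sum (fun i _ => h3 i)
      _ = _ := by
        rw [Finset.sum_const, Finset.card_range, nsmul_eq_mul]; push_cast; ring
  have h10 : (bad.card : ℝ) + (((Finset.univ : Finset (ChordDiagram n)).filter
    (fun C => ¬ ∃ i < 2*n, k ≤ chordsInBlock n C i t)).card : ℝ) = N := by exact_mod_cast h1
  unfold prob
  rw [le_div_iff₀ hNpos]
  have h11 : (1 - 2 * n * (((t:ℝ) ^ 2 / n) ^ k / k.factorial)) * (N:ℝ) ≤
      (((Finset.univ : Finset (ChordDiagram n)).filter
    (fun C => ¬ ∃ i < 2*n, k ≤ chordsInBlock n C i t)).card : ℝ) := by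
    rw [sub_mul, one_mul]
    linarith
  refine h11.trans (le_of_eq ?_)
  congr!

lemma cd_analytic (n : ℕ) (m : ℝ) (hm : m = (n:ℝ) ^ ((1:ℝ)/15)) (hm6 : 6 ≤ m) :
    2 * ⌊(n:ℝ) ^ ((1:ℝ)/3)⌋₊ ≤ n ∧ 0 < n ∧
    2 * n * ((((3 * ⌊(n:ℝ) ^ ((3:ℝ)/5)⌋₊ : ℕ):ℝ) ^ 2 / n) ^ ⌊(n:ℝ) ^ ((1:ℝ)/3)⌋₊ /
      (⌊(n:ℝ) ^ ((1:ℝ)/3)⌋₊).factorial) ≤ 2 * (m ^ 15 * Real.exp (-m)) := by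
  have hn0 : (0:ℝ) ≤ n := Nat.cast_nonneg n
  have e15 : (n:ℝ) = m ^ 15 := by
    rw [hm, ← Real.rpow_natCast, ← Real.rpow_mul hn0]; norm_num
  have e5 : (n:ℝ) ^ ((1:ℝ)/3) = m ^ 5 := by
    rw [hm, ← Real.rpow_natCast, ← Real.rpow_mul hn0]; norm_num
  have e9 : (n:ℝ) ^ ((3:ℝ)/5) = m ^ 9 := by
    rw [hm, ← Real.rpow_natCast, ← Real.rpow_mul hn0]; norm_num
  rw [e5, e9]
  have hm0 : 0 < m := by linarith
  have hkle : (⌊m ^ 5⌋₊ : ℝ) ≤ m ^ 5 := Nat.floor_le (by positivity)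
  have hkge : m ^ 5 - 1 ≤ (⌊m ^ 5⌋₊ : ℝ) := (Nat.sub_one_lt_floor _).le
  have htle : (⌊m ^ 9⌋₊ : ℝ) ≤ m ^ 9 := Nat.floor_le (by positivity)
  generalize ⌊m ^ 5⌋₊ = k at *
  generalize ⌊m ^ 9⌋₊ = s at *
  refine ⟨?_, ?_, ?_⟩
  · have : (2:ℝ) * k ≤ n := by
      rw [e15]
      have : (2:ℝ) ≤ m ^ 10 := by
        calc (2:ℝ) ≤ 6 ^ 10 := by norm_num
          _ ≤ m ^ 10 := by gcongr
      calc (2:ℝ) * k ≤ m ^ 10 * m ^ 5 := by gcongr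
        _ = m ^ 15 := by ring
    exact_mod_cast this
  · have : (0:ℝ) < n := by rw [e15]; positivity
    exact_mod_cast this
  · have hx : (((3 * s : ℕ):ℝ) ^ 2 / n) ≤ 9 * m ^ 3 := by
      rw [e15, div_le_iff₀ (by positivity)]
      push_cast
      calc (3 * (s:ℝ)) ^ 2 ≤ (3 * m ^ 9) ^ 2 := by gcongr
        _ = 9 * m ^ 3 * m ^ 15 := by ring
    have hx0 : 0 ≤ (((3 * s : ℕ):ℝ) ^ 2 / n) := by positivity
    generalize (((3 * s : ℕ):ℝ) ^ 2 / n) = x at *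
    have hexp : x ^ k / k.factorial ≤ Real.exp (-m) := by
      have h1 := Real.pow_div_factorial_le_exp (Real.exp 1 * (9 * m ^ 3)) (by positivity) k
      have h2 : x ^ k / k.factorial ≤ (9 * m ^ 3) ^ k / k.factorial := by gcongr
      have h3 : (Real.exp 1 * (9 * m ^ 3)) ^ k / k.factorial =
          Real.exp k * ((9 * m ^ 3) ^ k / k.factorial) := by
        rw [mul_pow, ← Real.exp_nat_mul, mul_one]; ring
      rw [h3] at h1
      have h4 : (9 * m ^ 3) ^ k / k.factorial ≤ Real.exp (Real.exp 1 * (9 * m ^ 3) - k) := by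
        rw [Real.exp_sub, le_div_iff₀ (Real.exp_pos _), mul_comm]
        exact h1
      refine h2.trans (h4.trans (Real.exp_le_exp.mpr ?_))
      have he : Real.exp 1 < 2.7182818286 := Real.exp_one_lt_d9
      have h5 : Real.exp 1 * (9 * m ^ 3) ≤ 25 * m ^ 3 := by
        have : (0:ℝ) < m ^ 3 := by positivity
        nlinarith
      have h6 : 36 * m ^ 3 ≤ m ^ 5 := by
        have : (36:ℝ) ≤ m ^ 2 := by nlinarith
        calc 36 * m ^ 3 ≤ m ^ 2 * m ^ 3 := by gcongr
          _ = m ^ 5 := by ring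
      have h7 : 36 * m ≤ m ^ 3 := by
        have : (36:ℝ) ≤ m ^ 2 := by nlinarith
        calc 36 * m ≤ m ^ 2 * m := by gcongr
          _ = m ^ 3 := by ring
      linarith
    rw [mul_assoc, e15]
    gcongr

theorem stmt11 :
    Filter.Tendsto
      (fun n : ℕ => prob n (fun C =>
        ¬ ∃ i < 2*n, ⌊(n:ℝ) ^ ((1:ℝ)/3)⌋₊ ≤ chordsInBlock n C i (3 * ⌊(n:ℝ) ^ ((3:ℝ)/5)⌋₊)))
      Filter.atTop (nhds 1) := by
  have hm : Tendsto (fun n : ℕ => (n:ℝ) ^ ((1:ℝ)/15)) atTop atTop :=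
    (tendsto_rpow_atTop (by norm_num)).comp tendsto_natCast_atTop_atTop
  have hlim : Tendsto (fun n : ℕ => 1 - 2 * (((n:ℝ) ^ ((1:ℝ)/15)) ^ 15 *
      Real.exp (-((n:ℝ) ^ ((1:ℝ)/15))))) atTop (nhds 1) := by
    have h := ((Real.tendsto_pow_mul_exp_neg_atTop_nhds_zero 15).comp hm).const_mul 2
    have h' := h.const_sub 1
    simpa using h'
  refine tendsto_of_tendsto_of_tendsto_of_le_of_le' hlim tendsto_const_nhds ?_ ?_
  · filter_upwards [hm.eventually_ge_atTop 6] with n hn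
    obtain ⟨h1, h2, h3⟩ := cd_analytic n _ rfl hn
    have h4 := cd_bad (n := n) (3 * ⌊(n:ℝ) ^ ((3:ℝ)/5)⌋₊) ⌊(n:ℝ) ^ ((1:ℝ)/3)⌋₊ h1 h2
    linarith
  · refine Eventually.of_forall fun n => ?_
    unfold prob
    apply div_le_one_of_le₀ _ (Nat.cast_nonneg _)
    exact_mod_cast Finset.card_le_card (Finset.filter_subset _ _)
end
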